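/- arXiv:1910.12405 — 4 statements merged into one kernel-verified Lean document; each statement's English description precedes it below -/
import Mathlib

section
/- Let A be an associative (unital) ring in which p·1 = 0 for a prime p, and let x, y ∈ A. Write ad_a(b) := a*b − b*a. Assume that the elements x, ad_y(x), ad_y^2(x), ad_y^3(x), … (all iterated adjoints ad_y^n(x), n ≥ 0) pairwise commute. Then (x*y)^p = x^p * y^p − x * (ad_y)^{p−1}(x^{p−1}) * y, where (ad_y)^{p−1} denotes the (p−1)-fold iterate of the map b ↦ y*b − b*y. -/
/-!
Put `D = ad y`, `c = ad (x * y) ^ (p - 1) x` and `f = C x * (X + C y)` in `A[X]`. The commutation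
hypothesis gives `ad f ^ (p - 1) (C x) = C c`, so that `f ^ p` has derivative `C c`. Its leading
term is `C (x ^ p) * X ^ p`, and a polynomial of degree less than `p` with zero derivative is
constant, hence `f ^ p = C (x ^ p) * X ^ p + C c * X + C ((x * y) ^ p)`. Write both sides as
something times `X + C y`, up to a constant that vanishes because evaluation at `-y`, with the
powers of `-y` on the right, kills such products. Cancelling the monic factor `X + C y` gives
`f ^ (p - 1) * C x = C (x ^ p) * (X + C y) ^ (p - 1) + C c`.

At `X = 0` this becomes `(x * y) ^ (p - 1) * x = x ^ p * y ^ (p - 1) + c`. Multiplied on the right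
by `C (x ^ (p - 1))` and evaluated at `-y`, where left multiplication by `X + C y` acts as `D`, it
becomes `0 = x ^ p * D ^ (p - 1) (x ^ (p - 1)) + c * x ^ (p - 1)`, since `f` commutes with
`C (x ^ p)` and is a multiple of `X + C y`. As `c` commutes with `x`, cancelling `x ^ (p - 1)`
leaves `c = -x * D ^ (p - 1) (x ^ (p - 1))` when `x` is left regular, and the deformation `X + C x`
of `x` is always left regular.
-/

open Polynomial LieAlgebra

attribute [local instance] LieRing.ofAssociativeRing LieAlgebra.ofAssociativeAlgebra

section Bracket
variable {R S : Type*} [Ring R] [Ring S]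

theorem map_ad_pow_apply (φ : R →+* S) (a b : R) (n : ℕ) :
    φ ((ad ℤ R a ^ n) b) = (ad ℤ S (φ a) ^ n) (φ b) := by
  induction n with
  | zero => rfl
  | succ n ih =>
    simp only [pow_succ', Module.End.mul_apply, ad_apply, Ring.lie_def, map_sub, map_mul, ih]

theorem ad_apply_mul (a b c : R) :
    ad ℤ R a (b * c) = ad ℤ R a b * c + b * ad ℤ R a c := by
  simp only [ad_apply, Ring.lie_def]
  noncomm_ring

theorem lie_mem_centralizer {s : Set R} {y w : R} (hs : ∀ z ∈ s, ⁅y, z⁆ ∈ s)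
    (hw : w ∈ s.centralizer) : ⁅y, w⁆ ∈ s.centralizer := by
  intro z hz
  have hzw : ⁅z, w⁆ = 0 := Commute.lie_eq (hw z hz)
  have hyzw : ⁅⁅z, y⁆, w⁆ = 0 := by
    rw [← lie_skew z y, neg_lie, Commute.lie_eq (hw _ (hs z hz)), neg_zero]
  exact commute_iff_lie_eq.2 (by rw [leibniz_lie, hzw, hyzw, lie_zero, add_zero])

end Bracket

section Polynomial
variable {R : Type*} [Ring R]

theorem constantCoeff_C (a : R) : constantCoeff (C a) = a :=
  coeff_C_zero

theorem constantCoeff_X : constantCoeff (X : R[X]) = 0 :=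
  coeff_X_zero

theorem eval_neg_X_add_C_mul (a : R) (f : R[X]) :
    ((X + C a) * f).eval (-a) = ad ℤ R a (f.eval (-a)) := by
  rw [add_mul, eval_add, X_mul, eval_mul_X, eval_C_mul, ad_apply, Ring.lie_def]
  noncomm_ring

theorem eval_neg_X_add_C_pow_mul_C (a b : R) (n : ℕ) :
    ((X + C a) ^ n * C b).eval (-a) = (ad ℤ R a ^ n) b := by
  induction n with
  | zero => simp
  | succ n ih =>
    rw [pow_succ', mul_assoc, eval_neg_X_add_C_mul, ih, pow_succ', Module.End.mul_apply]

end Polynomial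

section CharP
variable {R : Type*} [Ring R] (p : ℕ) [CharP R p]

theorem charP_end_int : CharP (Module.End ℤ R) p :=
  charP_of_injective_ringHom (f := (Algebra.lmul ℤ R).toRingHom) Algebra.lmul_injective p

variable [Fact p.Prime]

theorem ad_pow_char (a : R) : ad ℤ R a ^ p = ad ℤ R (a ^ p) := by
  have : CharP (Module.End ℤ R) p := charP_end_int p
  rw [ad_eq_lmul_left_sub_lmul_right, Pi.sub_apply, Pi.sub_apply,
    sub_pow_char_of_commute _ (LinearMap.commute_mulLeft_right a a), LinearMap.pow_mulLeft,
    LinearMap.pow_mulRight]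

theorem map_pow_char_of_leibniz (d : Module.End ℤ R) (hd : ∀ a b, d (a * b) = d a * b + a * d b)
    (a : R) : d (a ^ p) = (ad ℤ R a ^ (p - 1)) (d a) := by
  let φ : R →+* Module.End ℤ R := (Algebra.lmul ℤ R).toRingHom
  have : CharP (Module.End ℤ R) p := charP_end_int p
  have bracket (b : R) : ⁅φ b, d⁆ = -φ (d b) := by
    ext c
    simp [φ, Ring.lie_def, hd]
  refine Algebra.lmul_injective (R := ℤ) (neg_injective ?_)
  calc -φ (d (a ^ p)) = (ad ℤ _ (φ a) ^ p) d := by rw [← bracket, map_pow, ad_pow_char, ad_apply]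
    _ = (ad ℤ _ (φ a) ^ (p - 1)) (-φ (d a)) := by
      rw [← bracket, ← ad_apply ℤ, ← Module.End.mul_apply,
        pow_sub_one_mul (Fact.out : p.Prime).ne_zero]
    _ = -φ ((ad ℤ R a ^ (p - 1)) (d a)) := by rw [map_neg, map_ad_pow_apply]

theorem commute_pow_char_of_commute_lie {x y : R} (h : Commute x ⁅y, x⁆) : Commute y (x ^ p) := by
  have hp : p - 1 ≠ 0 := Nat.sub_ne_zero_of_lt (Fact.out : p.Prime).one_lt
  rw [commute_iff_lie_eq, ← ad_apply ℤ, map_pow_char_of_leibniz p _ (ad_apply_mul y),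
    ← pow_sub_one_mul hp, Module.End.mul_apply, ad_apply, ad_apply, h.lie_eq, map_zero]

theorem eq_C_of_derivative_eq_zero_of_natDegree_lt_char {f : R[X]} (hf : derivative f = 0)
    (hdeg : f.natDegree < p) : f = C (f.coeff 0) := by
  ext n
  rcases n with _ | n
  · simp
  rw [coeff_C_succ]
  rcases lt_or_ge (n + 1) p with hn | hn
  · have hunit : IsUnit ((n + 1 : ℕ) : R) :=
      (CharP.isUnit_natCast_iff Fact.out).2 (Nat.not_dvd_of_pos_of_lt n.succ_pos hn)
    have hcoeff : f.coeff (n + 1) * (n + 1 : ℕ) = 0 := by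
      rw [Nat.cast_succ, ← coeff_derivative, hf, coeff_zero]
    exact hunit.mul_left_eq_zero.1 hcoeff
  · exact coeff_eq_zero_of_natDegree_lt (hdeg.trans_le hn)

end CharP

/-- The iterated adjoints `ad y ^ n x`, `n ≥ 0`, commute pairwise; this is the hypothesis of
Deligne's identity, with `ad y` taken as a `ℤ`-linear map so that it applies in every ring. -/
def CommutingAdOrbit {A : Type*} [Ring A] (x y : A) : Prop :=
  ∀ m n : ℕ, Commute ((ad ℤ A y ^ m) x) ((ad ℤ A y ^ n) x)

namespace CommutingAdOrbit
variable {A : Type*} [Ring A] {x y : A}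

theorem commute_ad_mul_pow (h : CommutingAdOrbit x y) (k : ℕ) :
    Commute x ((ad ℤ A (x * y) ^ k) x) := by
  let orbit : Set A := Set.range fun n ↦ (ad ℤ A y ^ n) x
  have orbit_stable : ∀ z ∈ orbit, ⁅y, z⁆ ∈ orbit := by
    rintro _ ⟨n, rfl⟩
    exact ⟨n + 1, by simp only [pow_succ', Module.End.mul_apply, ad_apply]⟩
  -- The double centralizer of a commuting set is commutative and inherits `ad y`-stability.
  let S : Subring A := Subring.centralizer (orbit.centralizer)
  have S_stable : ∀ z ∈ S, ⁅y, z⁆ ∈ S := fun z hz ↦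
    lie_mem_centralizer (fun w hw ↦ lie_mem_centralizer orbit_stable hw) hz
  have x_mem : x ∈ S := Set.subset_centralizer_centralizer ⟨0, rfl⟩
  have comm_x : ∀ z ∈ S, Commute x z := fun z hz ↦
    Set.centralizer_centralizer_comm_of_comm
      (by rintro _ ⟨m, rfl⟩ _ ⟨n, rfl⟩; exact h m n) x x_mem z hz
  suffices hmem : (ad ℤ A (x * y) ^ k) x ∈ S from comm_x _ hmem
  induction k with
  | zero => exact x_mem
  | succ k ih =>
    set z := (ad ℤ A (x * y) ^ k) x
    have hz : (ad ℤ A (x * y) ^ (k + 1)) x = x * ⁅y, z⁆ := by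
      rw [pow_succ', Module.End.mul_apply, ad_apply, Ring.lie_def, Ring.lie_def, mul_sub,
        mul_assoc, ← mul_assoc z, ← (comm_x z ih).eq, mul_assoc]
    rw [hz]
    exact S.mul_mem x_mem (S_stable z ih)

theorem ad_C_mul_X_add_C_pow (h : CommutingAdOrbit x y) (k : ℕ) :
    (ad ℤ A[X] (C x * (X + C y)) ^ k) (C x) = C ((ad ℤ A (x * y) ^ k) x) := by
  induction k with
  | zero => rfl
  | succ k ih =>
    have hX : ⁅C x * X, C ((ad ℤ A (x * y) ^ k) x)⁆ = 0 :=
      Commute.lie_eq (((h.commute_ad_mul_pow k).map C).mul_left (commute_X _))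
    rw [pow_succ', Module.End.mul_apply, ih, pow_succ', Module.End.mul_apply, ad_apply, mul_add,
      add_lie, hX, zero_add, ad_apply, ← C_mul, Ring.lie_def, Ring.lie_def, ← C_mul, ← C_mul, C_sub]

theorem X_add_C_left (h : CommutingAdOrbit x y) : CommutingAdOrbit (X + C x) (C y) := by
  have X_central (n : ℕ) (f : A[X]) : Commute ((ad ℤ A[X] (C y) ^ n) X) f := by
    rcases n with _ | n
    · exact commute_X f
    · rw [pow_succ, Module.End.mul_apply, ad_apply, (commute_X (C y)).symm.lie_eq, map_zero]
      exact Commute.zero_left f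
  intro m n
  rw [map_add, map_add, ← map_ad_pow_apply, ← map_ad_pow_apply]
  exact (X_central m _).add_left ((X_central n _).symm.add_right ((h m n).map C))

variable (p : ℕ) [Fact p.Prime] [CharP A p]

theorem derivative_C_mul_X_add_C_pow_char (h : CommutingAdOrbit x y) :
    derivative ((C x * (X + C y)) ^ p) = C ((ad ℤ A (x * y) ^ (p - 1)) x) := by
  have hderiv := map_pow_char_of_leibniz p (derivative (R := A)).toAddMonoidHom.toIntLinearMap
    (fun _ _ ↦ derivative_mul) (C x * (X + C y))
  rw [← h.ad_C_mul_X_add_C_pow]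
  simpa using hderiv

theorem C_mul_X_add_C_pow_char (h : CommutingAdOrbit x y) :
    (C x * (X + C y)) ^ p =
      C (x ^ p) * X ^ p + C ((ad ℤ A (x * y) ^ (p - 1)) x) * X + C ((x * y) ^ p) := by
  have hp : p.Prime := Fact.out
  set F := C x * (X + C y) with F_def
  set c := (ad ℤ A (x * y) ^ (p - 1)) x
  set G := F ^ p - (C (x ^ p) * X ^ p + C c * X + C ((x * y) ^ p)) with G_def
  have F_deg : F.natDegree ≤ 1 := by
    rw [F_def]
    compute_degree
  have F_coeff_one : F.coeff 1 = x := by simp [F]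
  have derivative_G : derivative G = 0 := by
    rw [G_def, derivative_sub, h.derivative_C_mul_X_add_C_pow_char p]
    simp only [derivative_add, derivative_C_mul, derivative_X_pow, CharP.cast_eq_zero, C_0,
      zero_mul, mul_zero, derivative_X, mul_one, derivative_C, zero_add, add_zero, c, sub_self]
  have G_coeff_p : G.coeff p = 0 := by
    have F_pow_coeff_p : (F ^ p).coeff p = x ^ p := by
      simpa [F_coeff_one] using coeff_pow_of_natDegree_le (m := p) F_deg
    simp [G_def, -map_pow, F_pow_coeff_p, coeff_X, coeff_C, hp.ne_one.symm, hp.ne_zero]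
  have G_deg : G.natDegree < p := by
    have G_deg_le : G.natDegree ≤ p := by
      rw [G_def]
      compute_degree
      exact max_le (by simpa using Nat.mul_le_mul_left p F_deg) (max_le le_rfl hp.one_le)
    exact (natDegree_le_pred G_deg_le G_coeff_p).trans_lt (Nat.pred_lt hp.ne_zero)
  have G_coeff_zero : G.coeff 0 = 0 := by
    rw [← constantCoeff_apply]
    simp [G_def, F_def, constantCoeff_C, constantCoeff_X, -constantCoeff_apply, hp.ne_zero]
  rw [← sub_eq_zero, ← G_def,
    eq_C_of_derivative_eq_zero_of_natDegree_lt_char p derivative_G G_deg, G_coeff_zero, C_0]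

theorem C_mul_X_add_C_pow_char_pred_mul (h : CommutingAdOrbit x y) :
    (C x * (X + C y)) ^ (p - 1) * C x =
      C (x ^ p) * (X + C y) ^ (p - 1) + C ((ad ℤ A (x * y) ^ (p - 1)) x) := by
  have hp : p.Prime := Fact.out
  set c := (ad ℤ A (x * y) ^ (p - 1)) x
  set r := (C x * (X + C y)) ^ (p - 1) * C x - (C (x ^ p) * (X + C y) ^ (p - 1) + C c) with r_def
  have r_mul : r * (X + C y) = C ((x * y) ^ p - x ^ p * y ^ p - c * y) := by
    rw [r_def, sub_mul, add_mul, mul_assoc, mul_assoc, pow_sub_one_mul hp.ne_zero,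
      pow_sub_one_mul hp.ne_zero, h.C_mul_X_add_C_pow_char p,
      add_pow_char_of_commute p (commute_X _)]
    simp only [C_sub, C_mul, C_pow, c]
    noncomm_ring
  have root : (r * (X + C y)).eval (-y) = 0 := by
    rw [← sub_neg_eq_add, ← C_neg, eval_mul_X_sub_C]
  have hr : r * (X + C y) = 0 := by
    rw [r_mul, eval_C] at root
    rw [r_mul, root, C_0]
  exact sub_eq_zero.1 ((monic_X_add_C y).isRegular.right.mul_right_eq_zero_iff.1 hr)

theorem mul_pow_char_pred_mul (h : CommutingAdOrbit x y) :
    (x * y) ^ (p - 1) * x = x ^ p * y ^ (p - 1) + (ad ℤ A (x * y) ^ (p - 1)) x := by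
  simpa [constantCoeff_C, constantCoeff_X, -constantCoeff_apply] using
    congrArg constantCoeff (h.C_mul_X_add_C_pow_char_pred_mul p)

theorem pow_char_mul_ad_pow_add (h : CommutingAdOrbit x y) :
    x ^ p * (ad ℤ A y ^ (p - 1)) (x ^ (p - 1)) +
      (ad ℤ A (x * y) ^ (p - 1)) x * x ^ (p - 1) = 0 := by
  have hp : p.Prime := Fact.out
  have comm_y : Commute y (x ^ p) := commute_pow_char_of_commute_lie p (h 0 1)
  have comm : Commute (C x * (X + C y)) (C (x ^ p)) :=
    ((Commute.self_pow x p).map C).mul_left ((commute_X _).add_left (comm_y.map C))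
  have root : ((C x * (X + C y)) ^ (p - 1) * C x * C (x ^ (p - 1))).eval (-y) = 0 := by
    rw [mul_assoc, ← C_mul, mul_pow_sub_one hp.ne_zero, (comm.pow_left _).eq,
      ← pow_sub_one_mul (Nat.sub_ne_zero_of_lt hp.one_lt), ← mul_assoc, ← mul_assoc,
      ← sub_neg_eq_add, ← C_neg, eval_mul_X_sub_C]
  rwa [h.C_mul_X_add_C_pow_char_pred_mul p, add_mul, mul_assoc, eval_add, eval_C_mul,
    eval_neg_X_add_C_pow_mul_C, ← C_mul, eval_C] at root

theorem ad_mul_pow_char_pred_of_isLeftRegular (h : CommutingAdOrbit x y)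
    (hx : IsLeftRegular x) :
    (ad ℤ A (x * y) ^ (p - 1)) x = -(x * (ad ℤ A y ^ (p - 1)) (x ^ (p - 1))) := by
  have hp : p.Prime := Fact.out
  refine eq_neg_of_add_eq_zero_right ((hx.pow (p - 1)).mul_left_eq_zero_iff.1 ?_)
  rw [mul_add, ← mul_assoc, pow_sub_one_mul hp.ne_zero,
    ((h.commute_ad_mul_pow (p - 1)).pow_left (p - 1)).eq]
  exact h.pow_char_mul_ad_pow_add p

theorem ad_mul_pow_char_pred (h : CommutingAdOrbit x y) :
    (ad ℤ A (x * y) ^ (p - 1)) x = -(x * (ad ℤ A y ^ (p - 1)) (x ^ (p - 1))) := by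
  have generic := h.X_add_C_left.ad_mul_pow_char_pred_of_isLeftRegular p
    (monic_X_add_C x).isRegular.left
  simpa [map_ad_pow_apply, constantCoeff_C, constantCoeff_X, -constantCoeff_apply] using
    congrArg constantCoeff generic

end CommutingAdOrbit

/-- **Deligne's identity.** In an associative unital ring `A` of characteristic `p`
(`p` prime), if `x` and all iterated adjoints `ad_y^n(x)` pairwise commute, then
`(x*y)^p = x^p * y^p - x * (ad_y)^{p-1}(x^{p-1}) * y`. -/
theorem deligne_identity (A : Type*) [Ring A] (p : ℕ) (hp : p.Prime)
    (hchar : (p : A) = 0) (x y : A)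
    (hcomm : ∀ m n : ℕ,
      Commute ((fun b => y * b - b * y)^[m] x) ((fun b => y * b - b * y)^[n] x)) :
    (x * y) ^ p =
      x ^ p * y ^ p - x * (fun b => y * b - b * y)^[p - 1] (x ^ (p - 1)) * y := by
  have : Fact p.Prime := ⟨hp⟩
  cases subsingleton_or_nontrivial A
  · exact Subsingleton.elim _ _
  have : CharP A p := (CharP.charP_iff_prime_eq_zero hp).2 hchar
  have ad_pow (n : ℕ) (b : A) : (fun b => y * b - b * y)^[n] b = (ad ℤ A y ^ n) b :=
    (Module.End.pow_apply (ad ℤ A y) n b).symm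
  simp only [ad_pow] at hcomm ⊢
  have h : CommutingAdOrbit x y := hcomm
  rw [← pow_sub_one_mul hp.ne_zero, ← mul_assoc, h.mul_pow_char_pred_mul p,
    h.ad_mul_pow_char_pred p, add_mul, mul_assoc, pow_sub_one_mul hp.ne_zero, neg_mul,
    ← sub_eq_add_neg]
end

section
/- Let p be a prime, k a commutative ring with p·1 = 0, R a commutative k-algebra, and M an R-module. Let ∇ be a flat connection on M: an R-linear map ∂ ↦ ∇_∂ from Der_k(R) to the k-linear endomorphisms of M satisfying ∇_∂(r·m) = ∂(r)·m + r·∇_∂(m) for all r ∈ R, m ∈ M, and ∇_{[∂,∂']} = ∇_∂ ∘ ∇_{∂'} − ∇_{∂'} ∘ ∇_∂ for all ∂, ∂' ∈ Der_k(R). Define the p-curvature ψ(∂) := (∇_∂)^p − ∇_{∂^p}, where (∇_∂)^p is the p-fold composite and ∂^p is the p-fold composite of ∂ (which is again a derivation). Then: (1) ψ is Frobenius-semilinear, i.e. ψ(r·∂ + ∂') = r^p·ψ(∂) + ψ(∂') for all r ∈ R and ∂, ∂' ∈ Der_k(R); and (2) each ψ(∂) is R-linear, i.e. ψ(∂)(r·m)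 = r·ψ(∂)(m) for all r ∈ R, m ∈ M. -/
/-!
In characteristic `p` left and right multiplication by `z` commute, so `ad z ^ p = ad (z ^ p)`.

* For `N = ∇_D` this identity, applied to multiplication by `r`, is the Leibniz rule for `N ^ p`
  along `D ^ p`, which gives the `R`-linearity of `ψ(D)`.
* It also gives `d (z ^ p) = ad z ^ (p - 1) (d z)` for a derivation `d`. With `d = d/dX` and
  `z = x X + y` this is Jacobson's formula: `(x + y) ^ p - x ^ p - y ^ p` is a Lie polynomial in
  `x` and `y`. Applied to the pairs `(D, ∇_D)`, it shows that this difference is `(E, ∇_E)` for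
  some derivation `E`, so that `ψ` is additive.
* Symbols `∑ rⱼ X ^ j` of differential operators turn `a ∇_D` into multiplication by `a X` plus a
  derivation of `R[X]` killing `X`. Multiplications commute, so a single term of Jacobson's formula
  survives, and evaluating at the symbol `1` gives Hochschild's formula
  `(a ∇_D) ^ p = a ^ p ∇_D ^ p + (a D) ^ (p - 1) (a) ∇_D`. The same holds for `D`, and the last
  terms cancel in `ψ(a D)`.
-/

open Polynomial LieAlgebra

namespace PCurvature

attribute [local instance] LieRing.ofAssociativeRing

variable {k : Type*} [CommRing k] {p : ℕ}

section AdjointAction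

variable {A : Type*} [Ring A] [Algebra k A]

theorem sub_pow_prime_of_commute (hp : p.Prime) (hA : (p : A) = 0) {x y : A} (h : Commute x y) :
    (x - y) ^ p = x ^ p - y ^ p := by
  obtain ⟨r, hr⟩ := (h.sub_left rfl : Commute (x - y) y).exists_add_pow_prime_eq hp
  rw [sub_add_cancel, hA, zero_mul, zero_mul, zero_mul, add_zero] at hr
  exact eq_sub_of_add_eq hr.symm

theorem natCast_eq_zero_of_algebra (hk : (p : k) = 0) : (p : A) = 0 := by
  rw [← map_natCast (algebraMap k A), hk, map_zero]

theorem ad_pow_prime (hp : p.Prime) (hk : (p : k) = 0) (z : A) :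
    ad k A z ^ p = ad k A (z ^ p) := by
  rw [LieAlgebra.ad_eq_lmul_left_sub_lmul_right, Pi.sub_apply, Pi.sub_apply,
    sub_pow_prime_of_commute hp (natCast_eq_zero_of_algebra hk)
      (LinearMap.commute_mulLeft_right z z), LinearMap.pow_mulLeft, LinearMap.pow_mulRight]

theorem map_ad_pow_apply {B : Type*} [Ring B] [Algebra k B] (f : A →ₐ[k] B) (z w : A) (n : ℕ) :
    f ((ad k A z ^ n) w) = (ad k B (f z) ^ n) (f w) := by
  induction n with
  | zero => rfl
  | succ n ih => simp only [pow_succ', Module.End.mul_apply, ad_apply, Ring.lie_def, map_sub,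
      map_mul, ih]

/- In `End A`, bracketing `d` with left multiplication by `z ^ p` is the `p`-th iterate of
bracketing with left multiplication by `z`, and the first bracket is already a multiplication. -/
theorem leibniz_apply_pow_prime (hp : p.Prime) (hk : (p : k) = 0) {d : Module.End k A}
    (hd : ∀ a b, d (a * b) = d a * b + a * d b) (z : A) :
    d (z ^ p) = (ad k A z ^ (p - 1)) (d z) := by
  have lie_lmul (a : A) : ⁅Algebra.lmul k A a, d⁆ = -Algebra.lmul k A (d a) := by
    ext b
    simp [Ring.lie_def, hd]
  have key : Algebra.lmul k A (d (z ^ p)) = Algebra.lmul k A ((ad k A z ^ (p - 1)) (d z)) := by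
    have h := LinearMap.congr_fun (ad_pow_prime hp hk (Algebra.lmul k A z)) d
    rw [← pow_sub_one_mul hp.ne_zero, Module.End.mul_apply, ad_apply, ad_apply,
      ← map_pow (Algebra.lmul k A), lie_lmul, lie_lmul, map_neg, ← map_ad_pow_apply, neg_inj] at h
    exact h.symm
  exact Algebra.lmul_injective key

end AdjointAction

section Jacobson

variable {A : Type*} [Ring A] [Algebra k A]

theorem add_pow_eq_sum_coeff (x y : A) (n : ℕ) :
    (x + y) ^ (n + 1) = x ^ (n + 1) + y ^ (n + 1) +
      ∑ i ∈ Finset.range n, ((C x * X + C y) ^ (n + 1)).coeff (i + 1) := by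
  have hdeg : ((C x * X + C y) ^ (n + 1)).natDegree < n + 1 + 1 := by
    have := natDegree_pow_le_of_le (n + 1) (natDegree_linear_le (a := x) (b := y))
    lia
  have htop : ((C x * X + C y) ^ (n + 1)).coeff (n + 1) = x ^ (n + 1) := by
    simpa using coeff_pow_of_natDegree_le (m := n + 1) (natDegree_linear_le (a := x) (b := y))
  have hzero : ((C x * X + C y) ^ (n + 1)).coeff 0 = y ^ (n + 1) := by
    rw [← constantCoeff_apply, map_pow, constantCoeff_apply, coeff_add, coeff_mul_X_zero,
      coeff_C_zero, zero_add]
  have heval : (x + y) ^ (n + 1) = ((C x * X + C y) ^ (n + 1)).eval 1 := by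
    let φ : A[X] →+* A := eval₂RingHom' (RingHom.id A) 1 Commute.one_right
    have hφ (f : A[X]) : φ f = f.eval 1 := rfl
    rw [← hφ, map_pow, hφ, eval_add, eval_mul_X, eval_C, eval_C, mul_one]
  rw [heval, eval_eq_sum_range' hdeg, Finset.sum_range_succ, Finset.sum_range_succ']
  simp only [one_pow, mul_one, htop, hzero]
  abel

theorem natCast_smul_coeff_linear_pow_prime (hp : p.Prime) (hk : (p : k) = 0) (x y : A) (i : ℕ) :
    ((i + 1 : ℕ) : k) • ((C x * X + C y) ^ p).coeff (i + 1) =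
      ((ad k A[X] (C x * X + C y) ^ (p - 1)) (C x)).coeff i := by
  have hderiv := leibniz_apply_pow_prime (A := A[X]) hp hk
    (d := (derivative : A[X] →ₗ[A] A[X]).restrictScalars k)
    (fun a b => derivative_mul) (C x * X + C y)
  have hlin : derivative (C x * X + C y) = C x := by simp
  rw [LinearMap.restrictScalars_apply, LinearMap.restrictScalars_apply, hlin] at hderiv
  rw [← hderiv, coeff_derivative, ← Nat.cast_succ, ← Nat.cast_comm, Nat.cast_smul_eq_nsmul,
    nsmul_eq_mul]

theorem coeff_ad_linear_pow_mem {L : LieSubalgebra k A} {x y : A} (hx : x ∈ L) (hy : y ∈ L)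
    (n i : ℕ) : ((ad k A[X] (C x * X + C y) ^ n) (C x)).coeff i ∈ L := by
  induction n generalizing i with
  | zero =>
    rw [pow_zero, Module.End.one_apply, coeff_C]
    split_ifs
    · exact hx
    · exact L.zero_mem
  | succ n ih =>
    rw [pow_succ', Module.End.mul_apply, ad_apply]
    set f := (ad k A[X] (C x * X + C y) ^ n) (C x)
    have hf : ⁅C x * X + C y, f⁆ = ⁅C x, f⁆ * X + ⁅C y, f⁆ := by
      simp only [Ring.lie_def, add_mul, mul_add, sub_mul, mul_assoc, X_mul]
      abel
    have hC {a : A} (ha : a ∈ L) (j : ℕ) : (⁅C a, f⁆).coeff j ∈ L := by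
      rw [Ring.lie_def, coeff_sub, coeff_C_mul, coeff_mul_C]
      exact L.lie_mem ha (ih j)
    rw [hf, coeff_add]
    refine L.add_mem ?_ (hC hy i)
    cases i with
    | zero => simp
    | succ i => simpa using hC hx i

theorem ad_linear_pow_apply_of_commute {x y : A}
    (hxy : ∀ n, Commute x ((ad k A y ^ n) x)) (n : ℕ) :
    (ad k A[X] (C x * X + C y) ^ n) (C x) = C ((ad k A y ^ n) x) := by
  induction n with
  | zero => rfl
  | succ n ih =>
    rw [pow_succ', pow_succ', Module.End.mul_apply, Module.End.mul_apply, ih, ad_apply, ad_apply,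
      Ring.lie_def, Ring.lie_def, add_mul, mul_add, mul_assoc, X_mul, ← mul_assoc, ← mul_assoc,
      ← C_mul, ← C_mul, ← C_mul, ← C_mul, (hxy n).eq, C_sub]
    abel

theorem isUnit_natCast_of_lt_prime (hp : p.Prime) (hk : (p : k) = 0) {n : ℕ} (hn : n ≠ 0)
    (hnp : n < p) : IsUnit (n : k) := by
  have h : IsCoprime (n : k) (p : k) := (Nat.coprime_of_lt_prime hn hnp hp).symm.cast
  rwa [hk, isCoprime_zero_right] at h

theorem add_pow_prime_sub_mem (hp : p.Prime) (hk : (p : k) = 0) {L : LieSubalgebra k A} {x y : A}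
    (hx : x ∈ L) (hy : y ∈ L) : (x + y) ^ p - (x ^ p + y ^ p) ∈ L := by
  obtain ⟨q, rfl⟩ := Nat.exists_eq_succ_of_ne_zero hp.ne_zero
  rw [add_pow_eq_sum_coeff, add_sub_cancel_left]
  refine L.sum_mem fun i hi => ?_
  have hunit := isUnit_natCast_of_lt_prime hp hk i.succ_ne_zero (by simpa using hi)
  rw [← Submodule.smul_mem_iff_of_isUnit _ hunit, natCast_smul_coeff_linear_pow_prime hp hk]
  exact coeff_ad_linear_pow_mem hx hy _ _

theorem add_pow_prime_of_commute_ad_pow (hp : p.Prime) (hk : (p : k) = 0) {x y : A}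
    (hxy : ∀ n, Commute x ((ad k A y ^ n) x)) :
    (x + y) ^ p = x ^ p + y ^ p + (ad k A y ^ (p - 1)) x := by
  have hcoeff (i : ℕ) := (natCast_smul_coeff_linear_pow_prime hp hk x y i).trans
    (congrArg (coeff · i) (ad_linear_pow_apply_of_commute hxy (p - 1)))
  obtain ⟨q, rfl⟩ := Nat.exists_eq_add_of_le' hp.two_le
  rw [add_pow_eq_sum_coeff, Finset.sum_range_succ', Finset.sum_eq_zero, zero_add]
  · simpa using hcoeff 0
  · intro i hi
    have hunit : IsUnit ((i + 1 + 1 : ℕ) : k) :=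
      isUnit_natCast_of_lt_prime hp hk (Nat.succ_ne_zero _) (by simpa using hi)
    rw [← hunit.smul_eq_zero, hcoeff, coeff_C_succ]

end Jacobson

section OperatorApply

variable {R : Type*} [CommRing R] {M : Type*} [AddCommGroup M] [Module k M] [Module R M]

/-- The value at `m` of the differential operator `∑ rⱼ N ^ j` with symbol `∑ rⱼ X ^ j`. -/
noncomputable def operatorApply (N : Module.End k M) (m : M) : R[X] →ₗ[R] M :=
  lsum fun j => LinearMap.toSpanSingleton R M ((N ^ j) m)

theorem operatorApply_monomial (N : Module.End k M) (m : M) (j : ℕ) (r : R) :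
    operatorApply N m (monomial j r) = r • (N ^ j) m := by
  simp [operatorApply]

end OperatorApply

section Connection

variable {R : Type*} [CommRing R] [Algebra k R]
  {M : Type*} [AddCommGroup M] [Module k M] [Module R M]

/-- `N` acts on the `R`-module `M` as a connection does in the direction of the derivation `D`. -/
def IsConnectionAlong (D : Derivation k R R) (N : Module.End k M) : Prop :=
  ∀ (r : R) (m : M), N (r • m) = D r • m + r • N m

theorem isConnectionAlong_self (D : Derivation k R R) :
    IsConnectionAlong D (D : Module.End k R) := fun r s => by
  simp [mul_comm, add_comm]

namespace IsConnectionAlong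

variable [IsScalarTower k R M] {D : Derivation k R R} {N : Module.End k M}

theorem ad_pow_lsmul (hN : IsConnectionAlong D N) (r : R) (n : ℕ) :
    (ad k (Module.End k M) N ^ n) (Algebra.lsmul k k M r) = Algebra.lsmul k k M (D^[n] r) := by
  induction n with
  | zero => rfl
  | succ n ih =>
    rw [pow_succ', Module.End.mul_apply, ih, ad_apply, Function.iterate_succ_apply']
    ext m
    simp [Ring.lie_def, hN _ m]

theorem pow_prime_apply_smul (hN : IsConnectionAlong D N) (hp : p.Prime) (hk : (p : k) = 0)
    (r : R) (m : M) : (N ^ p) (r • m) = D^[p] r • m + r • (N ^ p) m := by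
  have h := LinearMap.congr_fun (hN.ad_pow_lsmul r p) m
  rw [ad_pow_prime hp hk, ad_apply] at h
  exact sub_eq_iff_eq_add.mp h

theorem add_lsmul_pow_prime (hN : IsConnectionAlong D N) (hp : p.Prime) (hk : (p : k) = 0)
    (r : R) : (Algebra.lsmul k k M r + N) ^ p =
      N ^ p + Algebra.lsmul k k M (r ^ p + D^[p - 1] r) := by
  have hcomm (n : ℕ) : Commute (Algebra.lsmul k k M r)
      ((ad k (Module.End k M) N ^ n) (Algebra.lsmul k k M r)) := by
    rw [hN.ad_pow_lsmul]
    exact (Commute.all r _).map _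
  rw [add_pow_prime_of_commute_ad_pow hp hk hcomm, hN.ad_pow_lsmul, map_add, map_pow]
  abel

end IsConnectionAlong

/-- The extension of a derivation `D` of `R` to `R[X]` acting on coefficients, that is, the one
killing `X`. -/
noncomputable def coeffDerivation (D : Derivation k R R) : Derivation k R[X] R[X] :=
  PolynomialModule.equivPolynomialSelf.compDer D.mapCoeffs

theorem coeffDerivation_monomial (D : Derivation k R R) (n : ℕ) (r : R) :
    coeffDerivation D (monomial n r) = monomial n (D r) := by
  change PolynomialModule.equivPolynomialSelf (D.mapCoeffs (monomial n r)) = _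
  rw [Derivation.mapCoeffs_monomial]
  rfl

namespace IsConnectionAlong

variable {D : Derivation k R R} {N : Module.End k M}

theorem apply_operatorApply (hN : IsConnectionAlong D N) (m : M) (f : R[X]) :
    N (operatorApply N m f) = operatorApply N m (X * f + coeffDerivation D f) := by
  induction f using Polynomial.induction_on' with
  | add f g hf hg =>
    simp only [map_add, mul_add, hf, hg]
    abel
  | monomial j r =>
    rw [coeffDerivation_monomial, X_mul_monomial, map_add, operatorApply_monomial,
      operatorApply_monomial, operatorApply_monomial, hN, pow_succ', Module.End.mul_apply, add_comm]

variable [IsScalarTower k R M]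

theorem smul_pow_prime (hN : IsConnectionAlong D N) (hp : p.Prime) (hk : (p : k) = 0) (a : R) :
    (a • N) ^ p = a ^ p • N ^ p + (a • D)^[p - 1] a • N := by
  ext m
  let δ : Derivation k R[X] R[X] := C a • coeffDerivation D
  let S : Module.End k R[X] := Algebra.lsmul k k R[X] (C a * X) + (δ : Module.End k R[X])
  have hS : Function.Semiconj (operatorApply N m) S ⇑(a • N) := fun f => by
    have hSf : S f = a • (X * f + coeffDerivation D f) := by
      simp [S, δ, smul_eq_C_mul]
    rw [hSf, map_smul, ← hN.apply_operatorApply, LinearMap.smul_apply]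
  have hδ (n : ℕ) (r : R) : δ^[n] (monomial 1 r) = monomial 1 ((a • D)^[n] r) := by
    have h : Function.Semiconj (monomial 1) ⇑(a • D) δ := fun r => by
      simp [δ, coeffDerivation_monomial, C_mul_monomial]
    exact ((h.iterate_right n) r).symm
  have hδ_one : ((δ : Module.End k R[X]) ^ p) 1 = 0 := by
    rw [← pow_sub_one_mul hp.ne_zero, Module.End.mul_apply]
    simp
  have hSp : (S ^ p) 1 = monomial p (a ^ p) + monomial 1 ((a • D)^[p - 1] a) := by
    rw [(isConnectionAlong_self δ).add_lsmul_pow_prime hp hk, LinearMap.add_apply, hδ_one, zero_add,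
      C_mul_X_eq_monomial, hδ, monomial_pow]
    simp
  calc ((a • N) ^ p) m = ((a • N) ^ p) (operatorApply N m (monomial 0 (1 : R))) := by
        rw [operatorApply_monomial, pow_zero, Module.End.one_apply, one_smul]
    _ = operatorApply N m ((S ^ p) 1) := by
        rw [Module.End.pow_apply, Module.End.pow_apply]
        exact ((hS.iterate_right p) 1).symm
    _ = a ^ p • (N ^ p) m + (a • D)^[p - 1] a • N m := by
        rw [hSp, map_add, operatorApply_monomial, operatorApply_monomial, pow_one]

end IsConnectionAlong

end Connection

section PCurvature

variable {R : Type*} [CommRing R] [Algebra k R]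
  {M : Type*} [AddCommGroup M] [Module k M]

/-- The restricted operation `D ↦ D ^ p` on the derivations of an algebra over a base of prime
characteristic `p`. -/
def derivationPow (hp : p.Prime) (hk : (p : k) = 0) (D : Derivation k R R) : Derivation k R R :=
  Derivation.mk' ((D : Module.End k R) ^ p) fun r s => by
    simpa [Module.End.pow_apply, mul_comm, add_comm] using
      (isConnectionAlong_self D).pow_prime_apply_smul hp hk r s

/-- The `p`-curvature `ψ(D) = (∇_D) ^ p - ∇_{D ^ p}` of an assignment `D ↦ ∇_D`. -/
def pCurvature (hp : p.Prime) (hk : (p : k) = 0) (nabla : Derivation k R R → Module.End k M)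
    (D : Derivation k R R) : Module.End k M :=
  nabla D ^ p - nabla (derivationPow hp hk D)

/- The correction terms in Jacobson's formula are Lie polynomials, and the pairs `(E, ∇_E)` form a
Lie subalgebra of `End (R × M)`. -/
theorem exists_derivation_add_pow_prime (hp : p.Prime) (hk : (p : k) = 0)
    (nabla : Derivation k R R →ₗ⁅k⁆ Module.End k M) (D D' : Derivation k R R) :
    ∃ E, derivationPow hp hk (D + D') = derivationPow hp hk D + derivationPow hp hk D' + E ∧
      nabla (D + D') ^ p = nabla D ^ p + nabla D' ^ p + nabla E := by
  let Φ : Derivation k R R →ₗ⁅k⁆ Module.End k (R × M) :=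
    { toFun D := (D : Module.End k R).prodMap (nabla D)
      map_add' D D' := by ext <;> simp
      map_smul' c D := by ext <;> simp
      map_lie' := by intros; ext <;> simp [Ring.lie_def] }
  have hΦ_pow (D : Derivation k R R) :
      Φ D ^ p = ((D : Module.End k R) ^ p).prodMap (nabla D ^ p) :=
    (map_pow (LinearMap.prodMapAlgHom k R M) (_, _) p).symm
  obtain ⟨E, hE⟩ := add_pow_prime_sub_mem hp hk (L := Φ.range) ⟨D, rfl⟩ ⟨D', rfl⟩
  have hE_apply (z : R × M) : (Φ (D + D') ^ p) z = (Φ D ^ p) z + (Φ D' ^ p) z + Φ E z := by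
    have hsum : Φ (D + D') ^ p = Φ D ^ p + Φ D' ^ p + Φ E := by
      rw [map_add]
      exact sub_eq_iff_eq_add'.mp hE.symm
    exact LinearMap.congr_fun hsum z
  simp only [hΦ_pow] at hE_apply
  refine ⟨E, ?_, ?_⟩
  · ext s
    exact congrArg Prod.fst (hE_apply (s, 0))
  · ext m
    exact congrArg Prod.snd (hE_apply (0, m))

theorem pCurvature_add (hp : p.Prime) (hk : (p : k) = 0)
    (nabla : Derivation k R R →ₗ⁅k⁆ Module.End k M) (D D' : Derivation k R R) :
    pCurvature hp hk nabla (D + D') = pCurvature hp hk nabla D + pCurvature hp hk nabla D' := by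
  obtain ⟨E, hE, hE_nabla⟩ := exists_derivation_add_pow_prime hp hk nabla D D'
  rw [pCurvature, pCurvature, pCurvature, hE, hE_nabla, map_add, map_add,
    add_sub_add_right_eq_sub, add_sub_add_comm]

variable [Module R M] [IsScalarTower k R M]

theorem derivationPow_smul (hp : p.Prime) (hk : (p : k) = 0) (r : R) (D : Derivation k R R) :
    derivationPow hp hk (r • D) = r ^ p • derivationPow hp hk D + (r • D)^[p - 1] r • D := by
  ext s
  exact LinearMap.congr_fun ((isConnectionAlong_self D).smul_pow_prime hp hk r) s

theorem pCurvature_smul (hp : p.Prime) (hk : (p : k) = 0)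
    (nabla : Derivation k R R →ₗ[R] Module.End k M) {D : Derivation k R R}
    (hD : IsConnectionAlong D (nabla D)) (r : R) :
    pCurvature hp hk nabla (r • D) = r ^ p • pCurvature hp hk nabla D := by
  rw [pCurvature, pCurvature, map_smul, hD.smul_pow_prime hp hk, derivationPow_smul, map_add,
    map_smul, map_smul, add_sub_add_right_eq_sub, smul_sub]

theorem pCurvature_smul_add (hp : p.Prime) (hk : (p : k) = 0)
    (nabla : Derivation k R R →ₗ[R] Module.End k M)
    (hflat : ∀ D D', nabla ⁅D, D'⁆ = ⁅nabla D, nabla D'⁆) (r : R) {D : Derivation k R R}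
    (hD : IsConnectionAlong D (nabla D)) (D' : Derivation k R R) :
    pCurvature hp hk nabla (r • D + D') =
      r ^ p • pCurvature hp hk nabla D + pCurvature hp hk nabla D' := by
  rw [← pCurvature_smul hp hk nabla hD]
  exact pCurvature_add hp hk { nabla.restrictScalars k with map_lie' := hflat _ _ } (r • D) D'

theorem pCurvature_apply_smul (hp : p.Prime) (hk : (p : k) = 0)
    {nabla : Derivation k R R → Module.End k M}
    (hnabla : ∀ D, IsConnectionAlong D (nabla D)) (D : Derivation k R R) (r : R) (m : M) :
    pCurvature hp hk nabla D (r • m) = r • pCurvature hp hk nabla D m := by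
  have hpow : derivationPow hp hk D r = D^[p] r := Module.End.pow_apply _ _ _
  rw [pCurvature, LinearMap.sub_apply, LinearMap.sub_apply,
    (hnabla D).pow_prime_apply_smul hp hk, hnabla, hpow, add_sub_add_left_eq_sub, smul_sub]

end PCurvature

end PCurvature

open PCurvature

/-- The `p`-curvature `ψ(∂) = (∇_∂)^p − ∇_{∂^p}` of a flat connection `∇` on an `R`-module
`M` (in characteristic `p`) is Frobenius-semilinear in `∂`, and each `ψ(∂)` is `R`-linear. -/
theorem pCurvature_semilinear_and_linear (p : ℕ) (hp : p.Prime)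
    (k : Type*) [CommRing k] (R : Type*) [CommRing R] [Algebra k R]
    (hchar : (p : k) = 0)
    (M : Type*) [AddCommGroup M] [Module k M] [Module R M] [IsScalarTower k R M]
    (nabla : Derivation k R R → Module.End k M)
    (hadd : ∀ D D' : Derivation k R R, nabla (D + D') = nabla D + nabla D')
    (hsmul : ∀ (r : R) (D : Derivation k R R) (m : M), nabla (r • D) m = r • nabla D m)
    (hLeib : ∀ (D : Derivation k R R) (r : R) (m : M),
      nabla D (r • m) = D r • m + r • nabla D m)
    (hflat : ∀ D D' : Derivation k R R,
      nabla ⁅D, D'⁆ = nabla D * nabla D' - nabla D' * nabla D)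
    (Dpow : Derivation k R R → Derivation k R R)
    (hDpow : ∀ (D : Derivation k R R) (x : R), Dpow D x = (⇑D)^[p] x) :
    (∀ (r : R) (D D' : Derivation k R R) (m : M),
        (nabla (r • D + D') ^ p - nabla (Dpow (r • D + D'))) m =
          r ^ p • ((nabla D ^ p - nabla (Dpow D)) m) +
            (nabla D' ^ p - nabla (Dpow D')) m) ∧
    (∀ (D : Derivation k R R) (r : R) (m : M),
        (nabla D ^ p - nabla (Dpow D)) (r • m) =
          r • (nabla D ^ p - nabla (Dpow D)) m) := by
  obtain rfl : Dpow = derivationPow hp hchar := by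
    ext D x
    rw [hDpow]
    exact (Module.End.pow_apply _ _ _).symm
  let nablaLin : Derivation k R R →ₗ[R] Module.End k M :=
    { toFun := nabla
      map_add' := hadd
      map_smul' r D := LinearMap.ext (hsmul r D) }
  refine ⟨fun r D D' m => ?_, pCurvature_apply_smul hp hchar hLeib⟩
  exact LinearMap.congr_fun (pCurvature_smul_add hp hchar nablaLin hflat r (hLeib D) D') m
end

section
/- Let p be a prime, K a field of characteristic p, d ≥ 1, and let a_1, …, a_d, b_1, …, b_d ∈ K. Then the quotient of the d-th Weyl algebra W_d(K) by the two-sided ideal generated by the elements t_i^p − a_i and ∂_i^p − b_i (1 ≤ i ≤ d) is a central simple K-algebra of dimension p^{2d} over K: its center is K·1, it has no two-sided ideals other than 0 and itself, and it has K-dimension p^{2d}. -/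
noncomputable section

/-- The defining relations of the `d`-th Weyl algebra: `t_i t_j = t_j t_i`,
`∂_i ∂_j = ∂_j ∂_i` and `∂_i t_j = t_j ∂_i + δ_{ij}`. -/
inductive WeylRel (k : Type*) [CommRing k] (d : ℕ) :
    FreeAlgebra k (Fin d ⊕ Fin d) → FreeAlgebra k (Fin d ⊕ Fin d) → Prop
  | tt (i j : Fin d) :
      WeylRel k d (FreeAlgebra.ι k (Sum.inl i) * FreeAlgebra.ι k (Sum.inl j))
        (FreeAlgebra.ι k (Sum.inl j) * FreeAlgebra.ι k (Sum.inl i))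
  | dd (i j : Fin d) :
      WeylRel k d (FreeAlgebra.ι k (Sum.inr i) * FreeAlgebra.ι k (Sum.inr j))
        (FreeAlgebra.ι k (Sum.inr j) * FreeAlgebra.ι k (Sum.inr i))
  | dt (i j : Fin d) :
      WeylRel k d (FreeAlgebra.ι k (Sum.inr i) * FreeAlgebra.ι k (Sum.inl j))
        (FreeAlgebra.ι k (Sum.inl j) * FreeAlgebra.ι k (Sum.inr i) + if i = j then 1 else 0)

/-- The `d`-th Weyl algebra over `k`: the free algebra on `t_1,…,t_d,∂_1,…,∂_d` modulo the
two-sided ideal generated by the Weyl relations. -/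
abbrev WeylAlgebra (k : Type*) [CommRing k] (d : ℕ) := RingQuot (WeylRel k d)

namespace WeylAlgebra

variable (k : Type*) [CommRing k] (d : ℕ)

/-- The generator `t_i` of the Weyl algebra. -/
def t (i : Fin d) : WeylAlgebra k d :=
  RingQuot.mkAlgHom k (WeylRel k d) (FreeAlgebra.ι k (Sum.inl i))

/-- The generator `∂_i` of the Weyl algebra. -/
def del (i : Fin d) : WeylAlgebra k d :=
  RingQuot.mkAlgHom k (WeylRel k d) (FreeAlgebra.ι k (Sum.inr i))

/-- The monomial `t^I = t_1^{i_1} ⋯ t_d^{i_d}` in the Weyl algebra. -/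
def monomialT (I : Fin d → ℕ) : WeylAlgebra k d :=
  ((List.finRange d).map fun i => t k d i ^ I i).prod

/-- The monomial `∂^J = ∂_1^{j_1} ⋯ ∂_d^{j_d}` in the Weyl algebra. -/
def monomialD (J : Fin d → ℕ) : WeylAlgebra k d :=
  ((List.finRange d).map fun i => del k d i ^ J i).prod

end WeylAlgebra

open WeylAlgebra in
/-- The relations `t_i^p = a_i`, `∂_i^p = b_i` imposed on the Weyl algebra `W_d(K)`;
the quotient by them is the quotient of `W_d(K)` by the two-sided ideal generated by the
elements `t_i^p − a_i` and `∂_i^p − b_i`. -/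
inductive WeylCentralRel (K : Type*) [CommRing K] (d p : ℕ) (a b : Fin d → K) :
    WeylAlgebra K d → WeylAlgebra K d → Prop
  | t (i : Fin d) :
      WeylCentralRel K d p a b (t K d i ^ p) (algebraMap K (WeylAlgebra K d) (a i))
  | del (i : Fin d) :
      WeylCentralRel K d p a b (del K d i ^ p) (algebraMap K (WeylAlgebra K d) (b i))

/-
Normal ordering is a linear map from commutative polynomials in `2d` variables to the quotient
algebra. It sends `t^I ∂^J` to `t^I ∂^J` and turns partial derivatives into commutators with the
`∂_i` and the `-t_i`. The relations `t_i^p = a_i`, `∂_i^p = b_i` make it surjective already on the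
`p^{2d}`-dimensional space of polynomials of degree less than `p` in each variable. On that space a
polynomial with vanishing partial derivatives is constant, so every nonzero polynomial can be
differentiated down to a nonzero constant. Applied to the kernel of normal ordering this gives
injectivity (hence the dimension), applied to the preimage of a two-sided ideal it gives simplicity,
and the center consists of the images of constants.

All of this needs the quotient to be nonzero. Over an algebraic closure `L` of `K` it acts on
`L[t_1, …, t_d] / (t_1^p - 1, …, t_d^p - 1)` by the usual operators `t_i` and `∂_i`, whose `p`-th
powers are `1` and `0`, each translated by a scalar that corrects its `p`-th power.
-/

open MvPolynomial

section RestrictedPolynomials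

variable {σ R : Type*} [CommSemiring R]

theorem add_single_mem_support_of_mem_support_pderiv {f : MvPolynomial σ R} {s : σ}
    {m : σ →₀ ℕ} (hm : m ∈ (pderiv s f).support) : m + Finsupp.single s 1 ∈ f.support := by
  rw [mem_support_iff, coeff_pderiv] at hm
  exact mem_support_iff.mpr (left_ne_zero_of_mul hm)

theorem pderiv_mem_restrictDegree {n : ℕ} {f : MvPolynomial σ R}
    (hf : f ∈ restrictDegree σ R n) (s : σ) : pderiv s f ∈ restrictDegree σ R n := by
  rw [mem_restrictDegree] at hf ⊢
  exact fun m hm i ↦ (Nat.le_add_right _ _).trans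
    (hf _ (add_single_mem_support_of_mem_support_pderiv hm) i)

theorem totalDegree_pderiv_lt {f : MvPolynomial σ R} {s : σ} (h : pderiv s f ≠ 0) :
    (pderiv s f).totalDegree < f.totalDegree := by
  obtain ⟨m, hm, hdeg⟩ := Finset.exists_mem_eq_sup _ (support_nonempty.mpr h)
    fun m : σ →₀ ℕ ↦ m.sum fun _ e ↦ e
  have hle := le_totalDegree (add_single_mem_support_of_mem_support_pderiv hm)
  rw [Finsupp.sum_add_index' (fun _ ↦ rfl) (fun _ _ _ ↦ rfl), Finsupp.sum_single_index rfl] at hle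
  rw [totalDegree, hdeg]
  exact hle

theorem eq_C_of_pderiv_eq_zero [NoZeroDivisors R] {p : ℕ} [CharP R p] {f : MvPolynomial σ R}
    (hf : f ∈ restrictDegree σ R (p - 1)) (h : ∀ s, pderiv s f = 0) : f = C (coeff 0 f) := by
  classical
  ext m
  rw [coeff_C]
  split_ifs with hm
  · rw [hm]
  by_contra hcoeff
  obtain ⟨s, hs : m s ≠ 0⟩ := Finsupp.ne_iff.mp (Ne.symm hm)
  have hderiv : coeff m f * (m s : R) = 0 := by
    have hcoeff' := coeff_pderiv (i := s) f (m - Finsupp.single s 1)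
    have hms : Finsupp.single s 1 ≤ m := Finsupp.single_le_iff.mpr (Nat.one_le_iff_ne_zero.mpr hs)
    rw [h s, coeff_zero, tsub_add_cancel_of_le hms, Finsupp.tsub_apply, Finsupp.single_eq_same,
      ← Nat.cast_add_one, Nat.sub_add_cancel (Nat.one_le_iff_ne_zero.mpr hs)] at hcoeff'
    exact hcoeff'.symm
  have hdvd : p ∣ m s :=
    (CharP.cast_eq_zero_iff R p _).mp ((mul_eq_zero.mp hderiv).resolve_left hcoeff)
  have hle := (mem_restrictDegree _ _ _).mp hf m (mem_support_iff.mpr hcoeff) s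
  have hge := Nat.le_of_dvd (Nat.pos_of_ne_zero hs) hdvd
  exact hs (by omega)

theorem map_restrictDegree_eq_range {M : Type*} [AddCommMonoid M] [Module R M] {p : ℕ}
    (hp : 0 < p) {c : σ → R} {Φ : MvPolynomial σ R →ₗ[R] M}
    (hΦ : ∀ s f, Φ (X s ^ p * f) = c s • Φ f) :
    (restrictDegree σ R (p - 1)).map Φ = LinearMap.range Φ := by
  refine le_antisymm LinearMap.map_le_range ?_
  rw [LinearMap.range_eq_map, Submodule.map_le_iff_le_comap]
  have hmonomial (m : σ →₀ ℕ) :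
      monomial m (1 : R) ∈ ((restrictDegree σ R (p - 1)).map Φ).comap Φ := by
    induction hN : m.degree using Nat.strong_induction_on generalizing m with
    | _ N ih =>
    subst hN
    by_cases hm : ∀ s, m s ≤ p - 1
    · exact ⟨monomial m 1, (monomial_mem_restrictSupport (R := R)).mpr (Or.inl hm), rfl⟩
    push Not at hm
    obtain ⟨s, hs⟩ := hm
    obtain ⟨n, rfl⟩ : ∃ n, m = Finsupp.single s p + n :=
      exists_add_of_le (Finsupp.single_le_iff.mpr (by omega))
    have hfactor : monomial (Finsupp.single s p + n) (1 : R) = X s ^ p * monomial n 1 := by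
      rw [X_pow_eq_monomial, monomial_mul, one_mul]
    rw [Submodule.mem_comap, hfactor, hΦ]
    exact Submodule.smul_mem _ _ (ih _ (by rw [map_add, Finsupp.degree_single]; omega) n rfl)
  rw [← (basisMonomials σ R).span_eq, Submodule.span_le, coe_basisMonomials]
  rintro _ ⟨m, rfl⟩
  exact hmonomial m

theorem finrank_restrictDegree (σ R : Type*) [Fintype σ] [CommRing R] [Nontrivial R] (n : ℕ) :
    Module.finrank R (restrictDegree σ R n) = (n + 1) ^ Fintype.card σ := by
  let exponents : {m : σ →₀ ℕ | ∀ s, m s ≤ n} ≃ (σ → Set.Iic n) :=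
    (Finsupp.equivFunOnFinite.subtypeEquiv fun _ ↦ Iff.rfl).trans
      (Equiv.subtypePiEquivPi (p := fun (_ : σ) k ↦ k ∈ Set.Iic n))
  rw [restrictDegree, Module.finrank_eq_nat_card_basis (basisRestrictSupport R _),
    Nat.card_congr exponents, Nat.card_fun]
  simp

theorem one_mem_of_pderiv_mem {K : Type*} [Field K] {p : ℕ} [CharP K p]
    {W : Submodule K (MvPolynomial σ K)} (hW : ∀ s, ∀ f ∈ W, pderiv s f ∈ W)
    {f : MvPolynomial σ K} (hf : f ∈ restrictDegree σ K (p - 1)) (hfW : f ∈ W) (hf0 : f ≠ 0) :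
    1 ∈ W := by
  induction hN : f.totalDegree using Nat.strong_induction_on generalizing f with
  | _ N ih =>
  subst hN
  by_cases hconst : ∀ s, pderiv s f = 0
  · have hC : f = C (coeff 0 f) := eq_C_of_pderiv_eq_zero hf hconst
    have hcoeff : coeff 0 f ≠ 0 := fun h0 ↦ hf0 (by rw [hC, h0, C_0])
    rwa [hC, ← mul_one (C _), ← smul_eq_C_mul, W.smul_mem_iff hcoeff] at hfW
  · push Not at hconst
    obtain ⟨s, hs⟩ := hconst
    exact ih _ (totalDegree_pderiv_lt hs) (pderiv_mem_restrictDegree hf s) (hW s f hfW) hs rfl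

end RestrictedPolynomials

section DerivationsAsCommutators

variable {σ K A : Type*} [Field K] {p : ℕ} [CharP K p] [Ring A] [Algebra K A]
  {Φ : MvPolynomial σ K →ₗ[K] A} {u : σ → A}

theorem disjoint_restrictDegree_ker [Nontrivial A] (hone : Φ 1 = 1)
    (hlie : ∀ s f, ⁅u s, Φ f⁆ = Φ (pderiv s f)) :
    Disjoint (restrictDegree σ K (p - 1)) (LinearMap.ker Φ) := by
  refine Submodule.disjoint_def.mpr fun f hf hker ↦ by_contra fun hf0 ↦ ?_
  have hker' : ∀ s, ∀ g ∈ LinearMap.ker Φ, pderiv s g ∈ LinearMap.ker Φ := fun s g hg ↦ by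
    rw [LinearMap.mem_ker, ← hlie, LinearMap.mem_ker.mp hg, Ring.lie_def, mul_zero, zero_mul,
      sub_zero]
  have h1 : Φ 1 = 0 := one_mem_of_pderiv_mem hker' hf hker hf0
  exact one_ne_zero (hone.symm.trans h1)

theorem finrank_eq_of_lie_eq_pderiv [Nontrivial A] [Fintype σ] (hp : 0 < p) (hone : Φ 1 = 1)
    (hlie : ∀ s f, ⁅u s, Φ f⁆ = Φ (pderiv s f))
    (hsurj : (restrictDegree σ K (p - 1)).map Φ = ⊤) :
    Module.finrank K A = p ^ Fintype.card σ := by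
  have hinj : Function.Injective (Φ.domRestrict (restrictDegree σ K (p - 1))) :=
    LinearMap.injective_domRestrict_iff.mpr (disjoint_restrictDegree_ker hone hlie)
  have hrange : LinearMap.range (Φ.domRestrict (restrictDegree σ K (p - 1))) = ⊤ := by
    rw [LinearMap.range_domRestrict, hsurj]
  rw [← (LinearEquiv.ofBijective _ ⟨hinj, LinearMap.range_eq_top.mp hrange⟩).finrank_eq,
    finrank_restrictDegree, Nat.sub_add_cancel hp]

theorem center_eq_bot_of_lie_eq_pderiv [Nontrivial A] (hone : Φ 1 = 1)
    (hlie : ∀ s f, ⁅u s, Φ f⁆ = Φ (pderiv s f))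
    (hsurj : (restrictDegree σ K (p - 1)).map Φ = ⊤) : Subalgebra.center K A = ⊥ := by
  refine eq_bot_iff.mpr fun z hz ↦ ?_
  obtain ⟨f, hf, rfl⟩ : z ∈ (restrictDegree σ K (p - 1)).map Φ := hsurj ▸ Submodule.mem_top
  have hpderiv (s : σ) : pderiv s f = 0 :=
    Submodule.disjoint_def.mp (disjoint_restrictDegree_ker hone hlie) _
      (pderiv_mem_restrictDegree hf s)
      (by rw [LinearMap.mem_ker, ← hlie, Ring.lie_def, Subalgebra.mem_center_iff.mp hz, sub_self])
  rw [eq_C_of_pderiv_eq_zero hf hpderiv, ← mul_one (C _), ← smul_eq_C_mul, map_smul, hone,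
    ← Algebra.algebraMap_eq_smul_one]
  exact Subalgebra.algebraMap_mem _ _

theorem isSimpleRing_of_lie_eq_pderiv [Nontrivial A] (hone : Φ 1 = 1)
    (hlie : ∀ s f, ⁅u s, Φ f⁆ = Φ (pderiv s f))
    (hsurj : (restrictDegree σ K (p - 1)).map Φ = ⊤) : IsSimpleRing A := by
  refine ⟨⟨fun I ↦ or_iff_not_imp_left.mpr fun hI ↦ ?_⟩⟩
  obtain ⟨z, hzI, hz0⟩ : ∃ z ∈ I, z ≠ 0 := by
    by_contra! hzero
    exact hI (eq_bot_iff.mpr fun z hz ↦ (hzero z hz).symm ▸ zero_mem _)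
  obtain ⟨f, hf, rfl⟩ : z ∈ (restrictDegree σ K (p - 1)).map Φ := hsurj ▸ Submodule.mem_top
  let W : Submodule K (MvPolynomial σ K) := (I.asIdeal.restrictScalars K).comap Φ
  have hW : ∀ s, ∀ g ∈ W, pderiv s g ∈ W := fun s g hg ↦ by
    have hgI : Φ g ∈ I := TwoSidedIdeal.mem_asIdeal.mp hg
    change Φ (pderiv s g) ∈ I.asIdeal
    rw [TwoSidedIdeal.mem_asIdeal, ← hlie, Ring.lie_def]
    exact I.sub_mem (I.mul_mem_left _ _ hgI) (I.mul_mem_right _ _ hgI)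
  have h1 : Φ 1 ∈ I.asIdeal :=
    one_mem_of_pderiv_mem hW hf (TwoSidedIdeal.mem_asIdeal.mpr hzI)
      fun hf0 ↦ hz0 (by rw [hf0, map_zero])
  rw [hone, TwoSidedIdeal.mem_asIdeal] at h1
  exact I.one_mem_iff.mp h1

end DerivationsAsCommutators

open scoped IsMulCommutative in
/-- The homomorphism from commutative polynomials to a possibly noncommutative algebra which sends
the variables to a commuting family of elements. -/
def aevalOfCommute {σ R A : Type*} [CommRing R] [Ring A] [Algebra R A] (x : σ → A)
    (hx : ∀ i j, Commute (x i) (x j)) : MvPolynomial σ R →ₐ[R] A :=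
  have : IsMulCommutative (Algebra.adjoin R (Set.range x)) :=
    Algebra.isMulCommutative_adjoin R (by rintro _ ⟨i, rfl⟩ _ ⟨j, rfl⟩; exact hx i j)
  (Algebra.adjoin R (Set.range x)).val.comp
    (aeval (S₁ := Algebra.adjoin R (Set.range x)) fun i ↦ ⟨x i, Algebra.subset_adjoin ⟨i, rfl⟩⟩)

@[simp]
theorem aevalOfCommute_X {σ R A : Type*} [CommRing R] [Ring A] [Algebra R A] (x : σ → A)
    (hx : ∀ i j, Commute (x i) (x j)) (i : σ) : aevalOfCommute (R := R) x hx (X i) = x i := by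
  simp [aevalOfCommute]

/-- The canonical commutation relations: the `x i` commute, the `y i` commute, and
`[y i, x j] = δ_{ij}`. -/
structure IsCanonicalPair {ι A : Type*} [DecidableEq ι] [Ring A] (x y : ι → A) : Prop where
  commute_left (i j : ι) : Commute (x i) (x j)
  commute_right (i j : ι) : Commute (y i) (y j)
  lie_right_left (i j : ι) : ⁅y i, x j⁆ = if i = j then 1 else 0

namespace IsCanonicalPair

variable {ι R A B : Type*} [DecidableEq ι] [CommRing R] [Ring A] [Algebra R A] [Ring B]
  [Algebra R B] {x y : ι → A}

theorem map (h : IsCanonicalPair x y) (f : A →ₐ[R] B) :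
    IsCanonicalPair (fun i ↦ f (x i)) (fun i ↦ f (y i)) where
  commute_left i j := (h.commute_left i j).map f
  commute_right i j := (h.commute_right i j).map f
  lie_right_left i j := by
    rw [Ring.lie_def, ← map_mul, ← map_mul, ← map_sub, ← Ring.lie_def, h.lie_right_left,
      apply_ite f, map_one, map_zero]

theorem add_algebraMap (h : IsCanonicalPair x y) (α β : ι → R) :
    IsCanonicalPair (fun i ↦ x i + algebraMap R A (α i)) (fun i ↦ y i + algebraMap R A (β i)) where
  commute_left i j :=
    ((h.commute_left i j).add_left (Algebra.commutes _ _)).add_right (Algebra.commutes _ _).symm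
  commute_right i j :=
    ((h.commute_right i j).add_left (Algebra.commutes _ _)).add_right (Algebra.commutes _ _).symm
  lie_right_left i j := by
    rw [← h.lie_right_left, Ring.lie_def, Ring.lie_def, add_mul, mul_add, mul_add, mul_add,
      Algebra.commutes (β i), Algebra.commutes (β i), ← Algebra.commutes (α j)]
    noncomm_ring

variable (R) in
/-- The operators by which the variables act on normally ordered elements: `X (inl i)` multiplies
by `x i` on the left and `X (inr i)` multiplies by `y i` on the right. -/
def sidedMul (x y : ι → A) : ι ⊕ ι → Module.End R A :=
  Sum.elim (fun i ↦ LinearMap.mulLeft R (x i)) (fun i ↦ LinearMap.mulRight R (y i))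

theorem commute_sidedMul (h : IsCanonicalPair x y) (s t : ι ⊕ ι) :
    Commute (sidedMul R x y s) (sidedMul R x y t) := by
  rcases s with i | i <;> rcases t with j | j
  · exact LinearMap.ext fun z ↦ by simp [sidedMul, ← mul_assoc, (h.commute_left i j).eq]
  · exact LinearMap.commute_mulLeft_right (x i) (y j)
  · exact (LinearMap.commute_mulLeft_right (x j) (y i)).symm
  · exact LinearMap.ext fun z ↦ by simp [sidedMul, mul_assoc, (h.commute_right i j).eq]

theorem lie_sumElim (h : IsCanonicalPair x y) (s t : ι ⊕ ι) :
    ⁅Sum.elim y (-x) s, Sum.elim x y t⁆ = if s = t then 1 else 0 := by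
  rcases s with i | i <;> rcases t with j | j
  · simpa only [Sum.elim_inl, Sum.inl.injEq] using h.lie_right_left i j
  · simpa [Ring.lie_def, sub_eq_zero] using (h.commute_right i j).eq
  · simpa [Ring.lie_def, neg_add_eq_zero] using (h.commute_left i j).eq
  · simpa [Ring.lie_def, neg_add_eq_sub, eq_comm (a := i)] using h.lie_right_left j i

theorem lie_sidedMul (h : IsCanonicalPair x y) (s t : ι ⊕ ι) (z : A) :
    ⁅Sum.elim y (-x) s, sidedMul R x y t z⁆ =
      (if s = t then z else 0) + sidedMul R x y t ⁅Sum.elim y (-x) s, z⁆ := by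
  have leibniz (u v w : A) : ⁅u, v * w⁆ = ⁅u, v⁆ * w + v * ⁅u, w⁆ := by
    simp only [Ring.lie_def]
    noncomm_ring
  rcases t with j | j
  · have hlie := h.lie_sumElim s (Sum.inl j)
    rw [Sum.elim_inl] at hlie
    simp only [sidedMul, Sum.elim_inl, LinearMap.mulLeft_apply]
    rw [leibniz, hlie, ite_mul, one_mul, zero_mul]
  · have hlie := h.lie_sumElim s (Sum.inr j)
    rw [Sum.elim_inr] at hlie
    simp only [sidedMul, Sum.elim_inr, LinearMap.mulRight_apply]
    rw [leibniz, hlie, mul_ite, mul_one, mul_zero, add_comm]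

variable (R) in
/-- Normal ordering: the linear map sending the commutative monomial with exponents `I` and `J` on
the two families of variables to `x ^ I * y ^ J`. -/
def normalOrder (h : IsCanonicalPair x y) : MvPolynomial (ι ⊕ ι) R →ₗ[R] A :=
  LinearMap.applyₗ 1 ∘ₗ (aevalOfCommute (sidedMul R x y) h.commute_sidedMul).toLinearMap

theorem normalOrder_one (h : IsCanonicalPair x y) : h.normalOrder R 1 = 1 := by
  simp [normalOrder]

theorem normalOrder_X_mul (h : IsCanonicalPair x y) (s : ι ⊕ ι) (f : MvPolynomial (ι ⊕ ι) R) :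
    h.normalOrder R (X s * f) = sidedMul R x y s (h.normalOrder R f) := by
  simp [normalOrder]

theorem lie_normalOrder (h : IsCanonicalPair x y) (s : ι ⊕ ι) (f : MvPolynomial (ι ⊕ ι) R) :
    ⁅Sum.elim y (-x) s, h.normalOrder R f⁆ = h.normalOrder R (pderiv s f) := by
  induction f using MvPolynomial.induction_on with
  | C c =>
    rw [pderiv_C, map_zero, ← mul_one (C c), ← smul_eq_C_mul, map_smul, normalOrder_one,
      Ring.lie_def, mul_smul_comm, smul_mul_assoc, mul_one, one_mul, sub_self]
  | add f g hf hg =>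
    rw [map_add, map_add, map_add, ← hf, ← hg]
    simp only [Ring.lie_def, mul_add, add_mul, add_sub_add_comm]
  | mul_X f t hf =>
    rw [mul_comm f, normalOrder_X_mul, h.lie_sidedMul, hf, pderiv_mul, map_add, normalOrder_X_mul,
      pderiv_X, Pi.single_apply]
    simp only [@eq_comm _ t s, ite_mul, one_mul, zero_mul, apply_ite (h.normalOrder R), map_zero]

theorem normalOrder_X_pow_mul (h : IsCanonicalPair x y) {p : ℕ} {a b : ι → R}
    (hx : ∀ i, x i ^ p = algebraMap R A (a i)) (hy : ∀ i, y i ^ p = algebraMap R A (b i))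
    (s : ι ⊕ ι) (f : MvPolynomial (ι ⊕ ι) R) :
    h.normalOrder R (X s ^ p * f) = Sum.elim a b s • h.normalOrder R f := by
  have hpow : sidedMul R x y s ^ p = algebraMap R (Module.End R A) (Sum.elim a b s) := by
    rcases s with i | i
    · ext z
      simp [sidedMul, LinearMap.pow_mulLeft, hx, Algebra.smul_def]
    · ext z
      simp [sidedMul, LinearMap.pow_mulRight, hy, Algebra.smul_def, Algebra.commutes]
  calc h.normalOrder R (X s ^ p * f) = (sidedMul R x y s ^ p) (h.normalOrder R f) := by
        simp [normalOrder]
    _ = Sum.elim a b s • h.normalOrder R f := by rw [hpow, Module.algebraMap_end_apply]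

theorem range_normalOrder (h : IsCanonicalPair x y)
    (hgen : Algebra.adjoin R (Set.range (Sum.elim x y)) = ⊤) :
    LinearMap.range (h.normalOrder R) = ⊤ := by
  have hmul (z : A) : ∀ m ∈ LinearMap.range (h.normalOrder R),
      z * m ∈ LinearMap.range (h.normalOrder R) := by
    have hz : z ∈ Algebra.adjoin R (Set.range (Sum.elim x y)) := hgen ▸ Algebra.mem_top
    induction hz using Algebra.adjoin_induction with
    | mem z hz =>
      rintro _ ⟨f, rfl⟩
      obtain ⟨i | i, rfl⟩ := hz
      · exact ⟨X (Sum.inl i) * f, h.normalOrder_X_mul _ f⟩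
      · have hlie : y i * h.normalOrder R f =
            h.normalOrder R (pderiv (Sum.inl i) f) + h.normalOrder R f * y i :=
          sub_eq_iff_eq_add.mp (h.lie_normalOrder (Sum.inl i) f)
        exact ⟨pderiv (Sum.inl i) f + X (Sum.inr i) * f, by
          rw [map_add, h.normalOrder_X_mul]; exact hlie.symm⟩
    | algebraMap r => exact fun m hm ↦ Algebra.smul_def r m ▸ Submodule.smul_mem _ r hm
    | add z w _ _ hz hw => exact fun m hm ↦ add_mul z w m ▸ add_mem (hz m hm) (hw m hm)
    | mul z w _ _ hz hw => exact fun m hm ↦ mul_assoc z w m ▸ hz _ (hw m hm)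
  exact eq_top_iff.mpr fun z _ ↦ mul_one z ▸ hmul z 1 ⟨1, h.normalOrder_one⟩

theorem map_normalOrder_restrictDegree (h : IsCanonicalPair x y) {p : ℕ} (hp : 0 < p)
    {a b : ι → R} (hx : ∀ i, x i ^ p = algebraMap R A (a i))
    (hy : ∀ i, y i ^ p = algebraMap R A (b i))
    (hgen : Algebra.adjoin R (Set.range (Sum.elim x y)) = ⊤) :
    (restrictDegree (ι ⊕ ι) R (p - 1)).map (h.normalOrder R) = ⊤ :=
  (map_restrictDegree_eq_range hp (h.normalOrder_X_pow_mul hx hy)).trans (h.range_normalOrder hgen)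

end IsCanonicalPair

section CyclicRepresentation

variable {ι : Type*} [DecidableEq ι] {p : ℕ} {L : Type*} [CommRing L]

variable (p L) in
/-- Multiplication by the `i`-th variable on `L[t] / (t_j ^ p - 1)`, whose elements are encoded by
their coefficient functions on `ι → ZMod p`. -/
def cyclicRaise (i : ι) : Module.End L ((ι → ZMod p) → L) :=
  LinearMap.funLeft L L (· - Pi.single i 1)

@[simp]
theorem cyclicRaise_apply (i : ι) (φ : (ι → ZMod p) → L) (g : ι → ZMod p) :
    cyclicRaise p L i φ g = φ (g - Pi.single i 1) :=
  rfl

theorem cyclicRaise_pow (i : ι) : cyclicRaise p L i ^ p = 1 := by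
  have hpow (k : ℕ) (φ : (ι → ZMod p) → L) (g : ι → ZMod p) :
      (cyclicRaise p L i ^ k) φ g = φ (g - k • Pi.single i 1) := by
    induction k generalizing φ with
    | zero => simp
    | succ k ih =>
      rw [pow_succ, Module.End.mul_apply, ih, cyclicRaise_apply, succ_nsmul, sub_sub]
  have hperiod : p • (Pi.single i 1 : ι → ZMod p) = 0 := funext fun j ↦ by simp
  refine LinearMap.ext fun φ ↦ funext fun g ↦ ?_
  rw [hpow, hperiod, sub_zero, Module.End.one_apply]

variable [Algebra (ZMod p) L]

variable (p L) in
/-- Differentiation in the `i`-th variable on `L[t] / (t_j ^ p - 1)`, whose elements are encoded by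
their coefficient functions on `ι → ZMod p`. -/
def cyclicLower (i : ι) : Module.End L ((ι → ZMod p) → L) where
  toFun φ g := (g i + 1) • φ (g + Pi.single i 1)
  map_add' _ _ := funext fun _ ↦ smul_add _ _ _
  map_smul' c _ := funext fun _ ↦ smul_comm _ c _

@[simp]
theorem cyclicLower_apply (i : ι) (φ : (ι → ZMod p) → L) (g : ι → ZMod p) :
    cyclicLower p L i φ g = (g i + 1) • φ (g + Pi.single i 1) :=
  rfl

theorem cyclicLower_pow [NeZero p] (i : ι) : cyclicLower p L i ^ p = 0 := by
  have hpow (k : ℕ) (φ : (ι → ZMod p) → L) (g : ι → ZMod p) :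
      (cyclicLower p L i ^ k) φ g =
        (∏ j ∈ Finset.range k, (g i + j + 1)) • φ (g + k • Pi.single i 1) := by
    induction k generalizing φ with
    | zero => simp
    | succ k ih =>
      rw [pow_succ, Module.End.mul_apply, ih, cyclicLower_apply, succ_nsmul, ← add_assoc,
        smul_smul, Finset.prod_range_succ]
      simp
  refine LinearMap.ext fun φ ↦ funext fun g ↦ ?_
  have hroot : ∏ j ∈ Finset.range p, (g i + j + 1) = 0 :=
    Finset.prod_eq_zero (Finset.mem_range.mpr (ZMod.val_lt (-(g i) - 1)))
      (by rw [ZMod.natCast_zmod_val]; ring)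
  rw [hpow, hroot, zero_smul, LinearMap.zero_apply, Pi.zero_apply]

theorem isCanonicalPair_cyclic :
    IsCanonicalPair (cyclicRaise p L (ι := ι)) (cyclicLower p L) where
  commute_left i j := LinearMap.ext fun φ ↦ funext fun g ↦ by
    simp [sub_right_comm]
  commute_right i j := LinearMap.ext fun φ ↦ funext fun g ↦ by
    rcases eq_or_ne i j with rfl | hij
    · rfl
    · simp [hij, hij.symm, add_right_comm, smul_smul, mul_comm]
  lie_right_left i j := LinearMap.ext fun φ ↦ funext fun g ↦ by
    rcases eq_or_ne i j with rfl | hij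
    · simp [Ring.lie_def, add_smul]
    · simp [Ring.lie_def, hij, add_sub_right_comm]

end CyclicRepresentation

theorem add_algebraMap_pow_char {R A : Type*} [CommRing R] [Ring A] [Algebra R A] {p : ℕ}
    [Fact p.Prime] [CharP A p] (z : A) (r : R) :
    (z + algebraMap R A r) ^ p = z ^ p + algebraMap R A (r ^ p) := by
  rw [add_pow_char_of_commute p (Algebra.commutes r z).symm, map_pow]

theorem exists_isCanonicalPair_pow_eq {K L : Type*} [Field K] [Field L] [IsAlgClosed L]
    [Algebra K L] {p : ℕ} [Fact p.Prime] [CharP L p] {ι : Type*} [DecidableEq ι] (a b : ι → K) :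
    ∃ x y : ι → Module.End L ((ι → ZMod p) → L), IsCanonicalPair x y ∧
      (∀ i, x i ^ p = algebraMap K _ (a i)) ∧ ∀ i, y i ^ p = algebraMap K _ (b i) := by
  let _ : Algebra (ZMod p) L := ZMod.algebra L p
  have : CharP (Module.End L ((ι → ZMod p) → L)) p :=
    charP_of_injective_algebraMap (algebraMap L _).injective p
  have hroot (c : L) : ∃ r : L, r ^ p = c :=
    IsAlgClosed.exists_pow_nat_eq c (Fact.out : p.Prime).pos
  choose α hα using fun i ↦ hroot (algebraMap K L (a i) - 1)
  choose β hβ using fun i ↦ hroot (algebraMap K L (b i))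
  refine ⟨_, _, isCanonicalPair_cyclic.add_algebraMap α β, fun i ↦ ?_, fun i ↦ ?_⟩
  · rw [add_algebraMap_pow_char, cyclicRaise_pow, hα, map_sub, map_one, add_sub_cancel,
      ← IsScalarTower.algebraMap_apply]
  · rw [add_algebraMap_pow_char, cyclicLower_pow, hβ, zero_add, ← IsScalarTower.algebraMap_apply]

namespace WeylAlgebra

variable {R A : Type*} [CommRing R] [Ring A] [Algebra R A] {d : ℕ} {x y : Fin d → A}

variable (R d) in
theorem isCanonicalPair : IsCanonicalPair (t R d) (del R d) where
  commute_left i j := by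
    have := RingQuot.mkAlgHom_rel R (WeylRel.tt (k := R) i j)
    rwa [map_mul, map_mul] at this
  commute_right i j := by
    have := RingQuot.mkAlgHom_rel R (WeylRel.dd (k := R) i j)
    rwa [map_mul, map_mul] at this
  lie_right_left i j := by
    have := RingQuot.mkAlgHom_rel R (WeylRel.dt (k := R) i j)
    rw [map_mul, map_add, map_mul, add_comm, apply_ite (RingQuot.mkAlgHom R _), map_one,
      map_zero] at this
    exact sub_eq_iff_eq_add.mpr this

variable (R) in
/-- The universal property of the Weyl algebra. -/
def lift (h : IsCanonicalPair x y) : WeylAlgebra R d →ₐ[R] A :=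
  RingQuot.liftAlgHom R ⟨FreeAlgebra.lift R (Sum.elim x y), by
    rintro _ _ (⟨i, j⟩ | ⟨i, j⟩ | ⟨i, j⟩)
    · simpa using (h.commute_left i j).eq
    · simpa using (h.commute_right i j).eq
    · have := sub_eq_iff_eq_add'.mp (h.lie_right_left i j)
      simpa [apply_ite (FreeAlgebra.lift R (Sum.elim x y))] using this⟩

@[simp]
theorem lift_t (h : IsCanonicalPair x y) (i : Fin d) : lift R h (t R d i) = x i := by
  simp [lift, t, RingQuot.liftAlgHom_mkAlgHom_apply]

@[simp]
theorem lift_del (h : IsCanonicalPair x y) (i : Fin d) : lift R h (del R d i) = y i := by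
  simp [lift, del, RingQuot.liftAlgHom_mkAlgHom_apply]

variable (R d) in
theorem adjoin_range_t_del :
    Algebra.adjoin R (Set.range (Sum.elim (t R d) (del R d))) = ⊤ := by
  have hgen : Sum.elim (t R d) (del R d) = RingQuot.mkAlgHom R (WeylRel R d) ∘ FreeAlgebra.ι R :=
    funext fun s ↦ by cases s <;> rfl
  rw [hgen, Set.range_comp, ← AlgHom.map_adjoin, FreeAlgebra.adjoin_range_ι, Algebra.map_top]
  exact (AlgHom.range_eq_top _).mpr (RingQuot.mkAlgHom_surjective R _)

end WeylAlgebra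

/-- The quotient of the Weyl algebra by the relations `t_i ^ p = a_i` and `∂_i ^ p = b_i`. -/
abbrev ReducedWeylAlgebra (R : Type*) [CommRing R] (d p : ℕ) (a b : Fin d → R) :=
  RingQuot (WeylCentralRel R d p a b)

namespace ReducedWeylAlgebra

open WeylAlgebra (t del)

variable {R : Type*} [CommRing R] {d p : ℕ} {a b : Fin d → R}

variable (R d p a b) in
/-- The projection from the Weyl algebra. -/
def mk : WeylAlgebra R d →ₐ[R] ReducedWeylAlgebra R d p a b :=
  RingQuot.mkAlgHom R (WeylCentralRel R d p a b)

theorem mk_t_pow (i : Fin d) : mk R d p a b (t R d i) ^ p = algebraMap R _ (a i) := by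
  rw [← map_pow, ← AlgHom.commutes (mk R d p a b)]
  exact RingQuot.mkAlgHom_rel R (WeylCentralRel.t i)

theorem mk_del_pow (i : Fin d) : mk R d p a b (del R d i) ^ p = algebraMap R _ (b i) := by
  rw [← map_pow, ← AlgHom.commutes (mk R d p a b)]
  exact RingQuot.mkAlgHom_rel R (WeylCentralRel.del i)

theorem isCanonicalPair :
    IsCanonicalPair (fun i ↦ mk R d p a b (t R d i)) (fun i ↦ mk R d p a b (del R d i)) :=
  (WeylAlgebra.isCanonicalPair R d).map _

theorem adjoin_range_mk :
    Algebra.adjoin R (Set.range (Sum.elim (fun i ↦ mk R d p a b (t R d i))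
      fun i ↦ mk R d p a b (del R d i))) = ⊤ := by
  rw [← Function.comp_def, ← Function.comp_def (mk R d p a b), ← Sum.comp_elim, Set.range_comp,
    ← AlgHom.map_adjoin, WeylAlgebra.adjoin_range_t_del, Algebra.map_top]
  exact (AlgHom.range_eq_top _).mpr (RingQuot.mkAlgHom_surjective R _)

theorem nontrivial_of_isCanonicalPair {A : Type*} [Ring A] [Algebra R A] [Nontrivial A]
    {x y : Fin d → A} (h : IsCanonicalPair x y) (hx : ∀ i, x i ^ p = algebraMap R A (a i))
    (hy : ∀ i, y i ^ p = algebraMap R A (b i)) : Nontrivial (ReducedWeylAlgebra R d p a b) := by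
  let f : ReducedWeylAlgebra R d p a b →ₐ[R] A :=
    RingQuot.liftAlgHom R ⟨WeylAlgebra.lift R h, by
      rintro _ _ (i | i)
      · rw [map_pow, WeylAlgebra.lift_t, AlgHom.commutes, hx]
      · rw [map_pow, WeylAlgebra.lift_del, AlgHom.commutes, hy]⟩
  exact f.toRingHom.domain_nontrivial

theorem nontrivial {K : Type*} [Field K] [Fact p.Prime] [CharP K p] (a b : Fin d → K) :
    Nontrivial (ReducedWeylAlgebra K d p a b) := by
  have : CharP (AlgebraicClosure K) p :=
    charP_of_injective_algebraMap (algebraMap K _).injective p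
  obtain ⟨x, y, hxy, hx, hy⟩ := exists_isCanonicalPair_pow_eq (L := AlgebraicClosure K) a b
  exact nontrivial_of_isCanonicalPair hxy hx hy

end ReducedWeylAlgebra

/-- In characteristic `p`, the quotient of the Weyl algebra `W_d(K)` by the two-sided ideal
generated by `t_i^p − a_i` and `∂_i^p − b_i` is a central simple `K`-algebra of dimension
`p^{2d}`: its center is `K·1`, it is a simple ring, and its `K`-dimension is `p^{2d}`. -/
theorem weylAlgebra_quotient_central_simple (p : ℕ) (hp : p.Prime)
    (K : Type*) [Field K] (hchar : (p : K) = 0) (d : ℕ) (hd : 1 ≤ d)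
    (a b : Fin d → K) :
    Subalgebra.center K (RingQuot (WeylCentralRel K d p a b)) = ⊥ ∧
    IsSimpleRing (RingQuot (WeylCentralRel K d p a b)) ∧
    Module.finrank K (RingQuot (WeylCentralRel K d p a b)) = p ^ (2 * d) := by
  have : Fact p.Prime := ⟨hp⟩
  have : CharP K p := ringChar.of_eq (CharP.ringChar_of_prime_eq_zero hp hchar)
  have : Nontrivial (RingQuot (WeylCentralRel K d p a b)) := ReducedWeylAlgebra.nontrivial a b
  have h := ReducedWeylAlgebra.isCanonicalPair (a := a) (b := b) (p := p)
  have hsurj : (restrictDegree _ K (p - 1)).map (h.normalOrder K) = ⊤ :=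
    h.map_normalOrder_restrictDegree hp.pos ReducedWeylAlgebra.mk_t_pow
      ReducedWeylAlgebra.mk_del_pow ReducedWeylAlgebra.adjoin_range_mk
  refine ⟨center_eq_bot_of_lie_eq_pderiv h.normalOrder_one h.lie_normalOrder hsurj,
    isSimpleRing_of_lie_eq_pderiv h.normalOrder_one h.lie_normalOrder hsurj, ?_⟩
  rw [finrank_eq_of_lie_eq_pderiv hp.pos h.normalOrder_one h.lie_normalOrder hsurj,
    Fintype.card_sum, Fintype.card_fin, two_mul]
end
end

section
/- Let p be a prime and k a commutative ring with p·1 = 0, and let W = W_d(k) be the d-th Weyl algebra over k (d ≥ 1), with center Z. Then W is an Azumaya algebra over Z: W is a faithful, finitely generated projective Z-module, and the natural Z-algebra map W ⊗_Z W^op → End_Z(W), sending δ ⊗ δ' to the Z-linear endomorphism x ↦ δ·x·δ', is bijective. -/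
noncomputable section

set_option synthInstance.maxHeartbeats 1000000
set_option maxHeartbeats 1600000
open scoped TensorProduct

namespace WeylAlgebra

variable (k : Type*) [CommRing k] (d : ℕ)

private lemma central_rotate {W : Type*} [Ring W] {c : W} (hc : ∀ g : W, g * c = c * g)
    (u v : W) : u * (v * c) = c * (u * v) := by
  rw [hc v, ← mul_assoc, hc u, mul_assoc]

private lemma central_rotate' {W : Type*} [Ring W] {c : W} (hc : ∀ g : W, g * c = c * g)
    (u v : W) : u * (c * v) = c * (u * v) := by
  rw [← mul_assoc, hc u, mul_assoc]

/-- The natural map `W ⊗_Z W^op → End_Z(W)`, `δ ⊗ δ' ↦ (x ↦ δ·x·δ')`, for the Weyl algebra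
`W` over its center `Z`. -/
def azumayaMap :
    (WeylAlgebra k d) ⊗[Subring.center (WeylAlgebra k d)] (WeylAlgebra k d)ᵐᵒᵖ
      →ₗ[Subring.center (WeylAlgebra k d)]
        Module.End (Subring.center (WeylAlgebra k d)) (WeylAlgebra k d) :=
  TensorProduct.lift
    { toFun := fun w =>
        { toFun := fun w' =>
            (LinearMap.mulRight (Subring.center (WeylAlgebra k d)) w'.unop).comp
              (LinearMap.mulLeft (Subring.center (WeylAlgebra k d)) w)
          map_add' := fun a b => by
            ext x
            simp [mul_add]
          map_smul' := fun z a => by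
            ext x
            have hc : ∀ g : WeylAlgebra k d,
                g * algebraMap (Subring.center (WeylAlgebra k d)) (WeylAlgebra k d) z =
                  algebraMap (Subring.center (WeylAlgebra k d)) (WeylAlgebra k d) z * g :=
              fun g => (Algebra.commutes z g).symm
            simp [Algebra.smul_def, mul_assoc, central_rotate hc, central_rotate' hc] }
      map_add' := fun a b => by
        ext x
        simp [add_mul]
      map_smul' := fun z a => by
        ext x
        have hc : ∀ g : WeylAlgebra k d,
            g * algebraMap (Subring.center (WeylAlgebra k d)) (WeylAlgebra k d) z =
              algebraMap (Subring.center (WeylAlgebra k d)) (WeylAlgebra k d) z * g :=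
          fun g => (Algebra.commutes z g).symm
        simp [Algebra.smul_def, mul_assoc, central_rotate hc, central_rotate' hc] }

end WeylAlgebra

/-!
Let `E = W ⊗ Wᵒᵖ` be the enveloping algebra of `W` over its center `Z`, and let `yᵢ` be dual to the
generators `xᵢ`, so that `⁅xᵢ, yⱼ⁆ = δᵢⱼ`. Put `Xᵢ = xᵢ ⊗ 1` and let `Dᵢ ∈ E` act as the inner
derivation `⁅yᵢ, ·⁆`. Then `⁅Xᵢ, Dⱼ⁆ = δᵢⱼ`, the `Dᵢ` commute, and `Dᵢ ^ p = 0` because `yᵢ ^ p` is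
central. Expanding `(ad X) ^ (p - 1)` in characteristic `p` gives
`∑ⱼ X ^ j * D ^ (p - 1) * X ^ (p - 1 - j) = (p - 1)! = -1`, which, applied to one index after the
other, yields `1 = ∑ (b ⊗ 1) * e` with every `e ∈ E` annihilated by all `Dᵢ`. Such an `e` acts on
`W` as a functional `φ` with values in `Z`, so `w = ∑ φ(w) b`. This dual basis gives projectivity
and finiteness; an endomorphism `f` is the action of `∑ (f(b) ⊗ 1) * e`, and `u = ∑ uᵢ ⊗ vᵢ` equals
`∑ (∑ᵢ uᵢ φ(vᵢ)) ⊗ b`, where `∑ᵢ uᵢ φ(vᵢ)` vanishes as soon as `u` acts by zero.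
-/

section PrimeCharacteristic

variable {R : Type*} [Ring R] (p : ℕ) [Fact p.Prime] [CharP R p]

theorem choose_prime_sub_one_eq_neg_one_pow {m : ℕ} (hm : m < p) :
    ((p - 1).choose m : R) = (-1) ^ m := by
  induction m with
  | zero => simp
  | succ m ih =>
    have hpascal : (p - 1).choose m + (p - 1).choose (m + 1) = p.choose (m + 1) := by
      rw [← Nat.choose_succ_succ', Nat.sub_add_cancel NeZero.one_le]
    have hzero : (p.choose (m + 1) : R) = 0 :=
      (CharP.cast_eq_zero_iff R p _).2 ((Fact.out : p.Prime).dvd_choose_self m.succ_ne_zero hm)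
    rw [pow_succ', neg_one_mul, ← ih (by lia), eq_neg_iff_add_eq_zero, add_comm, ← Nat.cast_add,
      hpascal, hzero]

theorem sub_pow_prime_sub_one_of_commute {a b : R} (h : Commute a b) :
    (a - b) ^ (p - 1) = ∑ j ∈ Finset.range p, a ^ j * b ^ (p - 1 - j) := by
  rw [sub_eq_add_neg, h.neg_right.add_pow, Nat.sub_add_cancel NeZero.one_le]
  refine Finset.sum_congr rfl fun j hj ↦ ?_
  have hjp : j < p := Finset.mem_range.1 hj
  have hsign : (-1 : R) ^ (p - 1 - j) * (-1) ^ (p - 1 - j) = 1 := by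
    rw [← pow_add, Even.neg_one_pow ⟨_, rfl⟩]
  rw [← Nat.choose_symm (by lia), choose_prime_sub_one_eq_neg_one_pow p (by lia), neg_pow' b,
    mul_assoc, mul_assoc, hsign, mul_one]

theorem factorial_prime_sub_one_eq_neg_one : ((p - 1).factorial : R) = -1 := by
  rw [← map_natCast (ZMod.castHom dvd_rfl R), ZMod.wilsons_lemma, map_neg, map_one]

end PrimeCharacteristic

section CanonicalPair

variable {E : Type*} [Ring E] {a b : E}

theorem lie_pow_succ_of_lie_eq_one (h : ⁅a, b⁆ = 1) (n : ℕ) :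
    ⁅a, b ^ (n + 1)⁆ = (n + 1) • b ^ n := by
  induction n with
  | zero => simpa using h
  | succ n ih =>
    have leibniz : ⁅a, b ^ (n + 1) * b⁆ = ⁅a, b ^ (n + 1)⁆ * b + b ^ (n + 1) * ⁅a, b⁆ := by
      simp only [Ring.lie_def]
      noncomm_ring
    rw [pow_succ, leibniz, ih, h, mul_one, smul_mul_assoc, ← pow_succ, ← succ_nsmul]

theorem mulLeft_sub_mulRight_pow_apply_pow (h : ⁅a, b⁆ = 1) (n : ℕ) :
    ((LinearMap.mulLeft ℤ a - LinearMap.mulRight ℤ a) ^ n) (b ^ n) = n.factorial := by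
  induction n with
  | zero => simp
  | succ n ih =>
    have hlie : (LinearMap.mulLeft ℤ a - LinearMap.mulRight ℤ a) (b ^ (n + 1)) =
        ⁅a, b ^ (n + 1)⁆ := rfl
    rw [pow_succ, Module.End.mul_apply, hlie, lie_pow_succ_of_lie_eq_one h, map_nsmul, ih,
      Nat.factorial_succ, nsmul_eq_mul, Nat.cast_mul]

variable (p : ℕ) [Fact p.Prime] [CharP E p]

theorem mulLeft_sub_mulRight_pow_prime_sub_one_apply (a b : E) :
    ((LinearMap.mulLeft ℤ a - LinearMap.mulRight ℤ a) ^ (p - 1)) b =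
      ∑ j ∈ Finset.range p, a ^ j * b * a ^ (p - 1 - j) := by
  have : CharP (Module.End ℤ E) p :=
    charP_of_injective_ringHom (f := (Algebra.lmul ℤ E).toRingHom) Algebra.lmul_injective p
  simp [sub_pow_prime_sub_one_of_commute p (LinearMap.commute_mulLeft_right (R := ℤ) a a),
    LinearMap.pow_mulLeft, LinearMap.pow_mulRight, mul_assoc]

theorem sum_pow_mul_pow_mul_pow_eq_neg_one (h : ⁅a, b⁆ = 1) :
    ∑ j ∈ Finset.range p, a ^ j * b ^ (p - 1) * a ^ (p - 1 - j) = -1 := by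
  rw [← mulLeft_sub_mulRight_pow_prime_sub_one_apply, mulLeft_sub_mulRight_pow_apply_pow h,
    factorial_prime_sub_one_eq_neg_one]

end CanonicalPair

section CommonAnnihilator

variable (R : Type*) {E ι : Type*} [CommRing R] [Ring E] [Algebra R E]

/-- The right annihilator `{e | b i * e = 0 for all i ∈ s}` of a subfamily of `b`. For the inner
derivations `⁅y i, ·⁆` in an enveloping algebra, its elements take values commuting with every
`y i`. -/
def commonAnnihilator (b : ι → E) (s : Finset ι) : Submodule R E :=
  ⨅ i ∈ s, LinearMap.ker (LinearMap.mulLeft R (b i))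

variable {R}

theorem mem_commonAnnihilator {b : ι → E} {s : Finset ι} {e : E} :
    e ∈ commonAnnihilator R b s ↔ ∀ i ∈ s, b i * e = 0 := by
  simp [commonAnnihilator]

variable (p : ℕ) [Fact p.Prime] [DecidableEq ι] {a b : ι → E}
  (hab : ∀ i j, ⁅a i, b j⁆ = if i = j then 1 else 0) (hbb : ∀ i j, Commute (b i) (b j))
  (hb : ∀ i, b i ^ p = 0) (L : Subalgebra R E) (ha : ∀ i, a i ∈ L)
include hab hbb hb

theorem pow_mul_pow_mul_mem_commonAnnihilator_insert {s : Finset ι} {i : ι} (hi : i ∉ s) {e : E}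
    (he : e ∈ commonAnnihilator R b s) (m : ℕ) :
    b i ^ (p - 1) * a i ^ m * e ∈ commonAnnihilator R b (insert i s) := by
  refine mem_commonAnnihilator.2 fun j hj ↦ ?_
  rcases Finset.mem_insert.1 hj with rfl | hjs
  · rw [mul_assoc, ← mul_assoc, mul_pow_sub_one (NeZero.ne p), hb, zero_mul]
  · have hij : i ≠ j := fun h ↦ hi (h ▸ hjs)
    have haj : Commute (b j) (a i) := by
      rw [Commute.symm_iff, commute_iff_lie_eq, hab, if_neg hij]
    rw [← mul_assoc, (((hbb j i).pow_right _).mul_right (haj.pow_right m)).eq, mul_assoc,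
      mem_commonAnnihilator.1 he j hjs, mul_zero]

variable [CharP E p]
include ha

theorem commonAnnihilator_le_mul_commonAnnihilator_insert {s : Finset ι} {i : ι} (hi : i ∉ s) :
    commonAnnihilator R b s ≤ L.toSubmodule * commonAnnihilator R b (insert i s) := by
  intro e he
  have hexpand : e = ∑ j ∈ Finset.range p,
      -(a i ^ j * (b i ^ (p - 1) * a i ^ (p - 1 - j) * e)) := by
    have h := sum_pow_mul_pow_mul_pow_eq_neg_one p (a := a i) (b := b i) (by simp [hab])
    calc e = -((-1) * e) := by simp
      _ = _ := by
        rw [← h, Finset.sum_mul, Finset.sum_neg_distrib]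
        simp only [mul_assoc]
  rw [hexpand]
  exact Submodule.sum_mem _ fun j _ ↦ Submodule.neg_mem _ <| Submodule.mul_mem_mul
    (L.pow_mem (ha i) j)
    (pow_mul_pow_mul_mem_commonAnnihilator_insert p hab hbb hb hi he _)

theorem one_mem_mul_commonAnnihilator (s : Finset ι) :
    1 ∈ L.toSubmodule * commonAnnihilator R b s := by
  induction s using Finset.induction_on with
  | empty =>
    simpa using Submodule.mul_mem_mul (M := L.toSubmodule) L.one_mem
      (mem_commonAnnihilator.2 (by simp) : (1 : E) ∈ commonAnnihilator R b ∅)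
  | insert i s hi ih =>
    rw [← L.isIdempotentElem_toSubmodule.eq, mul_assoc]
    exact mul_le_mul_right
      (commonAnnihilator_le_mul_commonAnnihilator_insert p hab hbb hb L ha hi) _ ih

end CommonAnnihilator

section AzumayaCriterion

open MulOpposite

variable (R A : Type*) [CommRing R] [Ring A] [Algebra R A]

/-- The elements of the enveloping algebra `A ⊗ Aᵐᵒᵖ` acting on `A` with values in the scalars.
When `R` acts faithfully on `A`, these act as `R`-linear functionals. -/
def scalarValued : Submodule R (A ⊗[R] Aᵐᵒᵖ) where
  carrier := {e | ∀ w, AlgHom.mulLeftRight R A e w ∈ (⊥ : Subalgebra R A)}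
  zero_mem' w := by simp
  add_mem' he hf w := by simpa using add_mem (he w) (hf w)
  smul_mem' r e he w := by simpa using Subalgebra.smul_mem _ (he w) r

/-- The copy `A ⊗ 1` of `A` in the enveloping algebra. -/
abbrev leftFactor : Subalgebra R (A ⊗[R] Aᵐᵒᵖ) :=
  (Algebra.TensorProduct.includeLeft : A →ₐ[R] A ⊗[R] Aᵐᵒᵖ).range

variable {R A}

theorem mulLeftRight_tmul_one_mul (b : A) (e : A ⊗[R] Aᵐᵒᵖ) (w : A) :
    AlgHom.mulLeftRight R A (b ⊗ₜ 1 * e) w = b * AlgHom.mulLeftRight R A e w := by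
  simp

theorem exists_dual_of_mem_scalarValued [FaithfulSMul R A] {e : A ⊗[R] Aᵐᵒᵖ}
    (he : e ∈ scalarValued R A) :
    ∃ φ : Module.Dual R A, ∀ w, AlgHom.mulLeftRight R A e w = algebraMap R A (φ w) := by
  let ε := Algebra.botEquivOfInjective (FaithfulSMul.algebraMap_injective R A)
  refine ⟨ε.toLinearMap ∘ₗ
    (AlgHom.mulLeftRight R A e).codRestrict (⊥ : Subalgebra R A).toSubmodule he, fun w ↦ ?_⟩
  exact congrArg Subtype.val (ε.symm_apply_apply ⟨_, he w⟩).symm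

-- For pure tensors `u = x ⊗ y` and `e = z ⊗ w`, both sides are `x * z * y * w`.
theorem mul'_map_mulLeftRight (u e : A ⊗[R] Aᵐᵒᵖ) :
    LinearMap.mul' R A (TensorProduct.map (AlgHom.mulLeftRight R A u)
        (opLinearEquiv R).symm.toLinearMap e) =
      LinearMap.mul' R A ((AlgHom.mulLeftRight R A e ∘ₗ (opLinearEquiv R).symm.toLinearMap).lTensor
        A u) := by
  induction u with
  | zero => simp
  | add u v hu hv => simp [TensorProduct.map_add_left, hu, hv]
  | tmul x y =>
    induction e with
    | zero => simp
    | add e f he hf =>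
      simp only [map_add, he, hf, LinearMap.add_comp, LinearMap.lTensor_add, LinearMap.add_apply]
    | tmul z w => simp [mul_assoc]

theorem lTensor_conj_mulLeftRight_tmul_one_mul {e : A ⊗[R] Aᵐᵒᵖ} {φ : Module.Dual R A}
    (hφ : ∀ w, AlgHom.mulLeftRight R A e w = algebraMap R A (φ w)) (b : A) (u : A ⊗[R] Aᵐᵒᵖ) :
    ((opLinearEquiv R).conj (AlgHom.mulLeftRight R A (b ⊗ₜ 1 * e))).lTensor A u =
      LinearMap.mul' R A ((AlgHom.mulLeftRight R A e ∘ₗ (opLinearEquiv R).symm.toLinearMap).lTensor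
        A u) ⊗ₜ op b := by
  induction u with
  | zero => simp
  | add u v hu hv => simp only [map_add, hu, hv, TensorProduct.add_tmul]
  | tmul x y =>
    have hscalar : b * algebraMap R A (φ y.unop) = φ y.unop • b := by
      rw [Algebra.smul_def, Algebra.commutes]
    simp only [LinearMap.lTensor_tmul, LinearEquiv.conj_apply_apply, mulLeftRight_tmul_one_mul,
      LinearMap.comp_apply, LinearMap.mul'_apply, hφ, coe_opLinearEquiv_symm, LinearEquiv.coe_coe,
      coe_opLinearEquiv, hscalar, op_smul, ← Algebra.commutes (φ y.unop) x, ← Algebra.smul_def,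
      TensorProduct.smul_tmul]

variable [FaithfulSMul R A] (h : 1 ∈ (leftFactor R A).toSubmodule * scalarValued R A)
include h

theorem mulLeftRight_injective_of_one_mem :
    Function.Injective (AlgHom.mulLeftRight R A) := by
  rw [injective_iff_map_eq_zero]
  intro u hu
  have hzero : ∀ x ∈ (leftFactor R A).toSubmodule * scalarValued R A,
      ((opLinearEquiv R).conj (AlgHom.mulLeftRight R A x)).lTensor A u = 0 := by
    intro x hx
    induction hx using Submodule.mul_induction_on' with
    | mem_mul_mem l hl e he =>
      obtain ⟨b, rfl⟩ := hl
      obtain ⟨φ, hφ⟩ := exists_dual_of_mem_scalarValued he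
      refine (lTensor_conj_mulLeftRight_tmul_one_mul hφ b u).trans ?_
      rw [← mul'_map_mulLeftRight, hu, TensorProduct.map_zero_left, LinearMap.zero_apply, map_zero,
        TensorProduct.zero_tmul]
    | add x _ y _ hx hy =>
      rw [map_add, map_add, LinearMap.lTensor_add, LinearMap.add_apply, hx, hy, add_zero]
  simpa only [map_one, Module.End.one_eq_id, LinearEquiv.conj_id, LinearMap.lTensor_id,
    LinearMap.id_apply] using hzero 1 h

theorem mulLeftRight_surjective_of_one_mem :
    Function.Surjective (AlgHom.mulLeftRight R A) := by
  intro f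
  have hrange : ∀ x ∈ (leftFactor R A).toSubmodule * scalarValued R A,
      f * AlgHom.mulLeftRight R A x ∈ (AlgHom.mulLeftRight R A).range := by
    intro x hx
    induction hx using Submodule.mul_induction_on' with
    | mem_mul_mem l hl e he =>
      obtain ⟨b, rfl⟩ := hl
      obtain ⟨φ, hφ⟩ := exists_dual_of_mem_scalarValued he
      refine ⟨f b ⊗ₜ 1 * e, LinearMap.ext fun w ↦ ?_⟩
      change AlgHom.mulLeftRight R A (f b ⊗ₜ 1 * e) w = f (AlgHom.mulLeftRight R A (b ⊗ₜ 1 * e) w)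
      simp only [mulLeftRight_tmul_one_mul, hφ, ← Algebra.commutes (φ w), ← Algebra.smul_def,
        map_smul]
    | add x _ y _ hx hy =>
      rw [map_add, mul_add]
      exact add_mem hx hy
  simpa using hrange 1 h

theorem one_mem_range_dualTensorHom_of_one_mem : 1 ∈ (dualTensorHom R A A).range := by
  have hle : (leftFactor R A).toSubmodule * scalarValued R A ≤
      (dualTensorHom R A A).range.comap (AlgHom.mulLeftRight R A).toLinearMap := by
    refine Submodule.mul_le.2 ?_
    rintro _ ⟨b, rfl⟩ e he
    obtain ⟨φ, hφ⟩ := exists_dual_of_mem_scalarValued he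
    refine ⟨φ ⊗ₜ b, LinearMap.ext fun w ↦ ?_⟩
    change _ = AlgHom.mulLeftRight R A (b ⊗ₜ 1 * e) w
    rw [mulLeftRight_tmul_one_mul, hφ, dualTensorHom_apply, Algebra.smul_def, Algebra.commutes]
  simpa using hle h

theorem isAzumaya_of_one_mem : IsAzumaya R A where
  __ := Module.Projective.of_one_mem_range_dualTensorHom (one_mem_range_dualTensorHom_of_one_mem h)
  __ := Module.Finite.of_one_mem_range_dualTensorHom (one_mem_range_dualTensorHom_of_one_mem h)
  bij := ⟨mulLeftRight_injective_of_one_mem h, mulLeftRight_surjective_of_one_mem h⟩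

end AzumayaCriterion

section Commutator

open MulOpposite

variable (R : Type*) {A : Type*} [CommRing R] [Ring A] [Algebra R A]

/-- The element of the enveloping algebra acting on `A` as the inner derivation `⁅y, ·⁆`. -/
def innerDerivation (y : A) : A ⊗[R] Aᵐᵒᵖ :=
  y ⊗ₜ 1 - 1 ⊗ₜ op y

theorem mulLeftRight_innerDerivation (y w : A) :
    AlgHom.mulLeftRight R A (innerDerivation R y) w = ⁅y, w⁆ := by
  simp [innerDerivation, Ring.lie_def]

variable {R}

theorem innerDerivation_eq_zero {y : A} (hy : y ∈ (⊥ : Subalgebra R A)) :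
    innerDerivation R y = 0 := by
  obtain ⟨r, rfl⟩ := Algebra.mem_bot.1 hy
  rw [innerDerivation, sub_eq_zero, Algebra.algebraMap_eq_smul_one, TensorProduct.smul_tmul,
    op_smul, op_one]

theorem commute_innerDerivation {y z : A} (h : ⁅y, z⁆ ∈ (⊥ : Subalgebra R A)) :
    Commute (innerDerivation R y) (innerDerivation R z) := by
  have hlie : ⁅innerDerivation R y, innerDerivation R z⁆ = innerDerivation R ⁅y, z⁆ := by
    simp only [innerDerivation, Ring.lie_def, mul_sub, sub_mul, Algebra.TensorProduct.tmul_mul_tmul,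
      one_mul, mul_one, ← op_mul, op_sub, TensorProduct.sub_tmul, TensorProduct.tmul_sub]
    abel
  rw [commute_iff_lie_eq, hlie, innerDerivation_eq_zero h]

theorem lie_tmul_one_innerDerivation (x y : A) :
    ⁅(x ⊗ₜ 1 : A ⊗[R] Aᵐᵒᵖ), innerDerivation R y⁆ = ⁅x, y⁆ ⊗ₜ 1 := by
  simp [innerDerivation, Ring.lie_def, mul_sub, sub_mul, TensorProduct.sub_tmul]

theorem innerDerivation_pow_char (p : ℕ) [Fact p.Prime] [CharP (A ⊗[R] Aᵐᵒᵖ) p] (y : A) :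
    innerDerivation R y ^ p = innerDerivation R (y ^ p) := by
  have hcomm : Commute (y ⊗ₜ 1 : A ⊗[R] Aᵐᵒᵖ) (1 ⊗ₜ op y) := by
    simp [Commute, SemiconjBy]
  simp [innerDerivation, sub_pow_char_of_commute p hcomm]

theorem commonAnnihilator_innerDerivation_le_scalarValued {ι : Type*} [Fintype ι] {y : ι → A}
    (hy : ∀ w, (∀ i, Commute (y i) w) → w ∈ (⊥ : Subalgebra R A)) :
    commonAnnihilator R (fun i ↦ innerDerivation R (y i)) Finset.univ ≤ scalarValued R A := by
  intro e he w
  refine hy _ fun i ↦ ?_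
  rw [commute_iff_lie_eq, ← mulLeftRight_innerDerivation R, ← Module.End.mul_apply, ← map_mul,
    mem_commonAnnihilator.1 he i (Finset.mem_univ i), map_zero, LinearMap.zero_apply]

theorem isAzumaya_of_dual_family [FaithfulSMul R A] {p : ℕ} (hp : p.Prime) (hpA : (p : A) = 0)
    {ι : Type*} [Finite ι] [DecidableEq ι] {x y : ι → A}
    (hxy : ∀ i j, ⁅x i, y j⁆ = if i = j then 1 else 0)
    (hyy : ∀ i j, ⁅y i, y j⁆ ∈ (⊥ : Subalgebra R A))
    (hyp : ∀ i, y i ^ p ∈ (⊥ : Subalgebra R A))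
    (hy : ∀ w, (∀ i, Commute (y i) w) → w ∈ (⊥ : Subalgebra R A)) : IsAzumaya R A := by
  refine isAzumaya_of_one_mem ?_
  cases nonempty_fintype ι
  rcases subsingleton_or_nontrivial (A ⊗[R] Aᵐᵒᵖ) with _ | _
  · rw [Subsingleton.elim 1 0]
    exact Submodule.zero_mem _
  have : Fact p.Prime := ⟨hp⟩
  have : CharP (A ⊗[R] Aᵐᵒᵖ) p := by
    rw [CharP.charP_iff_prime_eq_zero hp,
      ← map_natCast (Algebra.TensorProduct.includeLeft : A →ₐ[R] A ⊗[R] Aᵐᵒᵖ), hpA, map_zero]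
  have hpair (i j : ι) : ⁅(x i ⊗ₜ 1 : A ⊗[R] Aᵐᵒᵖ), innerDerivation R (y j)⁆ =
      if i = j then 1 else 0 := by
    rw [lie_tmul_one_innerDerivation, hxy]
    split_ifs
    exacts [rfl, TensorProduct.zero_tmul _ _]
  have hpow (i : ι) : innerDerivation R (y i) ^ p = 0 := by
    rw [innerDerivation_pow_char, innerDerivation_eq_zero (hyp i)]
  exact mul_le_mul_right (commonAnnihilator_innerDerivation_le_scalarValued hy) _
    (one_mem_mul_commonAnnihilator p hpair (fun i j ↦ commute_innerDerivation (hyy i j)) hpow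
      (leftFactor R A) (fun i ↦ ⟨x i, rfl⟩) Finset.univ)

end Commutator

section CanonicalCommutationRelations

variable {A ι : Type*} [Ring A] [DecidableEq ι] {t D : ι → A}
  (htt : ∀ i j, Commute (t i) (t j)) (hDD : ∀ i j, Commute (D i) (D j))
  (hDt : ∀ i j, ⁅D i, t j⁆ = if i = j then 1 else 0)
include htt hDD hDt

theorem lie_sumElim_sumElim_neg (i j : ι ⊕ ι) :
    ⁅Sum.elim t D i, Sum.elim (-D) t j⁆ = if i = j then 1 else 0 := by
  rcases i with i | i <;> rcases j with j | j
  · have hskew : ⁅t i, -D j⁆ = ⁅D j, t i⁆ := by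
      simp only [Ring.lie_def]
      noncomm_ring
    simp [hskew, hDt, eq_comm]
  · simp [(htt i j).lie_eq]
  · simp [(hDD i j).neg_right.lie_eq]
  · simp [hDt]

variable {R : Type*} [CommRing R] [Algebra R A]

theorem lie_sumElim_neg_mem_bot (i j : ι ⊕ ι) :
    ⁅Sum.elim (-D) t i, Sum.elim (-D) t j⁆ ∈ (⊥ : Subalgebra R A) := by
  have hmem (i j : ι ⊕ ι) : ⁅Sum.elim t D i, Sum.elim (-D) t j⁆ ∈ (⊥ : Subalgebra R A) := by
    rw [lie_sumElim_sumElim_neg htt hDD hDt]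
    split_ifs
    exacts [one_mem _, zero_mem _]
  rcases i with i | i
  · simpa [Ring.lie_def, add_comm, sub_eq_add_neg] using neg_mem (hmem (.inr i) j)
  · exact hmem (.inl i) j

variable {p : ℕ} (hpA : (p : A) = 0)
include hpA

theorem commute_sumElim_sumElim_neg_pow (hp : p ≠ 0) (i j : ι ⊕ ι) :
    Commute (Sum.elim t D i) (Sum.elim (-D) t j ^ p) := by
  have hlie := lie_sumElim_sumElim_neg htt hDD hDt i j
  rcases eq_or_ne i j with rfl | hij
  · obtain ⟨n, rfl⟩ := Nat.exists_eq_succ_of_ne_zero hp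
    rw [commute_iff_lie_eq, lie_pow_succ_of_lie_eq_one (hlie.trans (if_pos rfl)), nsmul_eq_mul,
      hpA, zero_mul]
  · exact (commute_iff_lie_eq.2 (hlie.trans (if_neg hij))).pow_right p

theorem isAzumaya_of_canonical_commutation_relations [FaithfulSMul R A] [Finite ι] (hp : p.Prime)
    (hcentral : ∀ w, (∀ i, Commute (t i) w) → (∀ i, Commute (D i) w) → w ∈ (⊥ : Subalgebra R A)) :
    IsAzumaya R A := by
  have hcentral_elim (w : A) (hw : ∀ i, Commute (Sum.elim t D i) w) : w ∈ (⊥ : Subalgebra R A) :=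
    hcentral w (fun i ↦ hw (.inl i)) fun i ↦ hw (.inr i)
  refine isAzumaya_of_dual_family hp hpA (lie_sumElim_sumElim_neg htt hDD hDt)
    (lie_sumElim_neg_mem_bot htt hDD hDt) (fun j ↦ hcentral_elim _ fun i ↦ ?_) fun w hw ↦ ?_
  · exact commute_sumElim_sumElim_neg_pow htt hDD hDt hpA hp.ne_zero i j
  · exact hcentral w (fun i ↦ hw (.inr i)) fun i ↦ Commute.neg_left_iff.1 (hw (.inl i))

end CanonicalCommutationRelations

namespace WeylAlgebra

variable (k : Type*) [CommRing k] (d : ℕ)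

theorem commute_t (i j : Fin d) : Commute (t k d i) (t k d j) := by
  simpa [Commute, SemiconjBy, t] using RingQuot.mkAlgHom_rel k (WeylRel.tt (k := k) i j)

theorem commute_del (i j : Fin d) : Commute (del k d i) (del k d j) := by
  simpa [Commute, SemiconjBy, del] using RingQuot.mkAlgHom_rel k (WeylRel.dd (k := k) i j)

theorem lie_del_t (i j : Fin d) : ⁅del k d i, t k d j⁆ = if i = j then 1 else 0 := by
  rw [Ring.lie_def, sub_eq_iff_eq_add']
  simpa [t, del, apply_ite (RingQuot.mkAlgHom k (WeylRel k d))] using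
    RingQuot.mkAlgHom_rel k (WeylRel.dt (k := k) i j)

theorem adjoin_range_t_union_range_del :
    Algebra.adjoin k (Set.range (t k d) ∪ Set.range (del k d)) = ⊤ := by
  have hgen : Sum.elim (t k d) (del k d) = RingQuot.mkAlgHom k (WeylRel k d) ∘ FreeAlgebra.ι k := by
    ext (i | i) <;> rfl
  rw [← Set.Sum.elim_range, hgen, Set.range_comp, ← AlgHom.map_adjoin,
    FreeAlgebra.adjoin_range_ι, Algebra.map_top, AlgHom.range_eq_top]
  exact RingQuot.mkAlgHom_surjective k (WeylRel k d)

variable {k d}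

theorem mem_center_of_commute {w : WeylAlgebra k d} (ht : ∀ i, Commute (t k d i) w)
    (hdel : ∀ i, Commute (del k d i) w) : w ∈ Subring.center (WeylAlgebra k d) := by
  have hle : Algebra.adjoin k (Set.range (t k d) ∪ Set.range (del k d)) ≤
      Subalgebra.centralizer k {w} := by
    refine Algebra.adjoin_le ?_
    rintro _ (⟨i, rfl⟩ | ⟨i, rfl⟩) _ rfl
    exacts [(ht i).symm.eq, (hdel i).symm.eq]
  rw [adjoin_range_t_union_range_del] at hle
  exact Subring.mem_center_iff.2 fun v ↦ (hle (Algebra.mem_top : v ∈ ⊤) w rfl).symm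

variable (d) in
theorem isAzumaya_center {p : ℕ} (hp : p.Prime) (hpk : (p : k) = 0) :
    IsAzumaya (Subring.center (WeylAlgebra k d)) (WeylAlgebra k d) := by
  have hpW : (p : WeylAlgebra k d) = 0 := by
    rw [← map_natCast (algebraMap k (WeylAlgebra k d)), hpk, map_zero]
  exact isAzumaya_of_canonical_commutation_relations (commute_t k d) (commute_del k d)
    (lie_del_t k d) hpW hp fun w ht hdel ↦
      Algebra.mem_bot.2 ⟨⟨w, mem_center_of_commute ht hdel⟩, rfl⟩

theorem azumayaMap_eq_mulLeftRight :
    azumayaMap k d =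
      (AlgHom.mulLeftRight (Subring.center (WeylAlgebra k d)) (WeylAlgebra k d)).toLinearMap :=
  TensorProduct.ext' fun a b ↦ LinearMap.ext fun w ↦ (AlgHom.mulLeftRight_apply _ _ a b w).symm

end WeylAlgebra

open WeylAlgebra in
/-- **Azumaya property of the Weyl algebra.** In characteristic `p`, the Weyl algebra `W`
is an Azumaya algebra over its center `Z`: it is a faithful, finitely generated projective
`Z`-module, and the natural map `W ⊗_Z W^op → End_Z(W)`, `δ ⊗ δ' ↦ (x ↦ δ·x·δ')`,
is bijective. -/
theorem weylAlgebra_isAzumaya (p : ℕ) (hp : p.Prime)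
    (k : Type*) [CommRing k] (hchar : (p : k) = 0) (d : ℕ) (hd : 1 ≤ d) :
    Module.Finite (Subring.center (WeylAlgebra k d)) (WeylAlgebra k d) ∧
    Module.Projective (Subring.center (WeylAlgebra k d)) (WeylAlgebra k d) ∧
    FaithfulSMul (Subring.center (WeylAlgebra k d)) (WeylAlgebra k d) ∧
    Function.Bijective (azumayaMap k d) := by
  have azumaya := isAzumaya_center d hp hchar
  refine ⟨azumaya.toFinite, azumaya.toProjective, azumaya.toFaithfulSMul, ?_⟩
  rw [azumayaMap_eq_mulLeftRight]
  exact azumaya.bij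
end
end
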